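/- arXiv:math/0205116 — 2 statements merged into one kernel-verified Lean document; each statement's English description precedes it below -/
import Mathlib

section
/- Let k ∈ {1, 2, 3} and suppose τ, σ, σ/τ ∈ H. Then Z_k(τ,σ) = τ^{−k} Z_k(−1/τ, σ/τ) + (−σ)^{−k} Z_k(−τ/σ, −1/σ) + iπ a_k, where the anomaly terms are a_1 = −1/2 + 1/(2τ) − 1/(2σ) + σ/(6τ) + τ/(6σ) + 1/(6τσ), a_2 = −1/τ + 1/σ − 1/(τσ), and a_3 = 1/(τσ). -/
open Complex Filter Topology

/-- The open upper half-plane as a subset of `ℂ`. -/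
def UHP : Set ℂ := {z : ℂ | 0 < z.im}

/-- `qexp τ = e^{2πiτ}`. -/
noncomputable def qexp (τ : ℂ) : ℂ := Complex.exp (2 * Real.pi * Complex.I * τ)

/-- Elliptic zeta values `Z_k(τ,σ)`. -/
noncomputable def ellipticZeta (k : ℕ) (τ σ : ℂ) : ℂ :=
  -((2 * (Real.pi : ℂ) * Complex.I) ^ k / (Nat.factorial (k - 1) : ℂ)) *
    ∑' j : ℕ+, (j : ℂ) ^ (k - 1) *
      (qexp τ ^ (j : ℕ) - (-1 : ℂ) ^ k * qexp σ ^ (j : ℕ)) /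
      ((1 - qexp τ ^ (j : ℕ)) * (1 - qexp σ ^ (j : ℕ)))

/-- `D_k(q)`: the normalized generating function of sums of `(k-1)`-st powers of divisors. -/
noncomputable def Dk (k : ℕ) (q : ℂ) : ℂ :=
  ((-2 * (Real.pi : ℂ) * Complex.I) ^ k / (Nat.factorial (k - 1) : ℂ)) *
    ∑' n : ℕ+, (∑ d ∈ Nat.divisors (n : ℕ), (d : ℂ) ^ (k - 1)) * q ^ (n : ℕ)

/-- Ruijsenaars's elliptic gamma function. -/
noncomputable def ellipticGamma (z τ σ : ℂ) : ℂ :=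
  ∏' p : ℕ × ℕ,
    (1 - qexp τ ^ (p.1 + 1) * qexp σ ^ (p.2 + 1) * Complex.exp (-(2 * Real.pi * Complex.I) * z)) /
    (1 - qexp τ ^ p.1 * qexp σ ^ p.2 * Complex.exp (2 * Real.pi * Complex.I * z))

/-- The modified theta function `θ₀(z,τ)`. -/
noncomputable def theta0 (z τ : ℂ) : ℂ :=
  ∏' j : ℕ, (1 - qexp τ ^ (j + 1) * Complex.exp (-(2 * Real.pi * Complex.I) * z)) *
            (1 - qexp τ ^ j * Complex.exp (2 * Real.pi * Complex.I * z))

/-- A modular form of weight `k` for `SL(2,ℤ)`: a holomorphic function on the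
upper half-plane transforming with weight `k` under `SL(2,ℤ)` and bounded as `Im τ → ∞`. -/
def IsModularForm (k : ℕ) (G : ℂ → ℂ) : Prop :=
  DifferentiableOn ℂ G UHP ∧
  (∀ A : Matrix.SpecialLinearGroup (Fin 2) ℤ, ∀ τ ∈ UHP,
      G (((A 0 0 : ℤ) * τ + (A 0 1 : ℤ)) / ((A 1 0 : ℤ) * τ + (A 1 1 : ℤ))) =
        ((A 1 0 : ℤ) * τ + (A 1 1 : ℤ)) ^ k * G τ) ∧
  (∃ C : ℝ, ∀ τ ∈ UHP, 1 ≤ τ.im → ‖G τ‖ ≤ C)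

/-- All factors in the defining double product of the elliptic gamma function are nonzero. -/
def EGFactorsNeZero (z τ σ : ℂ) : Prop :=
  ∀ j ℓ : ℕ,
    (1 - qexp τ ^ (j + 1) * qexp σ ^ (ℓ + 1) * Complex.exp (-(2 * Real.pi * Complex.I) * z)) ≠ 0 ∧
    (1 - qexp τ ^ j * qexp σ ^ ℓ * Complex.exp (2 * Real.pi * Complex.I * z)) ≠ 0


lemma ez_residue_sum {ι : Type*} [DecidableEq ι] (S : Finset ι) (pt : ι → ℂ)
    (hinj : Set.InjOn pt S) (P : ι → ℂ → ℂ) (r : ι → ℂ) (R : ℝ) (hR : 0 < R)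
    (hin : ∀ i ∈ S, ‖pt i‖ < R)
    (hP : ∀ i ∈ S, ∀ z, z ≠ pt i → DifferentiableAt ℂ (P i) z)
    (hPint : ∀ i ∈ S, (∮ z in C(0, R), P i z) = 2 * Real.pi * I * r i)
    (h : ℂ → ℂ)
    (hd : ∀ z, ‖z‖ ≤ R → (∀ i ∈ S, z ≠ pt i) → DifferentiableAt ℂ h z)
    (hpole : ∀ i ∈ S, ∃ c, Tendsto (fun z => h z - P i z) (𝓝[≠] (pt i)) (𝓝 c)) :
    (∮ z in C(0, R), h z) = 2 * Real.pi * I * ∑ i ∈ S, r i := by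
  classical
  set H : ℂ → ℂ := fun z => h z - ∑ i ∈ S, P i z with hH
  have hHd : ∀ z, ‖z‖ ≤ R → (∀ i ∈ S, z ≠ pt i) → DifferentiableAt ℂ H z := by
    intro z hz hne
    refine (hd z hz hne).sub ?_
    exact DifferentiableAt.fun_sum fun i hi => hP i hi z (hne i hi)
  have hHlim : ∀ i ∈ S, ∃ c, Tendsto H (𝓝[≠] (pt i)) (𝓝 c) := by
    intro i hi
    obtain ⟨c, hc⟩ := hpole i hi
    refine ⟨c - ∑ j ∈ S.erase i, P j (pt i), ?_⟩
    have h1 : Tendsto (fun z => ∑ j ∈ S.erase i, P j z) (𝓝[≠] (pt i))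
        (𝓝 (∑ j ∈ S.erase i, P j (pt i))) := by
      refine tendsto_finsetSum _ fun j hj => ?_
      have hj' := Finset.mem_erase.1 hj
      exact ((hP j hj'.2 (pt i) (fun e => hj'.1 (hinj hj'.2 hi e.symm))).continuousAt.tendsto).mono_left
        nhdsWithin_le_nhds
    refine (hc.sub h1).congr fun z => ?_
    simp only [hH]
    rw [← Finset.add_sum_erase S (fun j => P j z) hi]
    ring
  set K : ℂ → ℂ := fun z => if z ∈ S.image pt then limUnder (𝓝[≠] z) H else H z with hK
  have hfin : ∀ T : Finset ℂ, ∀ z, ∀ᶠ w in 𝓝[≠] z, w ∉ T := by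
    intro T z
    have h2 : ((T.erase z : Finset ℂ) : Set ℂ)ᶜ ∈ 𝓝 z :=
      (T.erase z).finite_toSet.isClosed.isOpen_compl.mem_nhds (by simp)
    filter_upwards [nhdsWithin_le_nhds h2, self_mem_nhdsWithin] with w hw hw2 hwT
    exact hw (Finset.mem_coe.2 (Finset.mem_erase.2 ⟨hw2, hwT⟩))
  have hKev : ∀ z, K =ᶠ[𝓝[≠] z] H := by
    intro z
    filter_upwards [hfin (S.image pt) z] with w hw
    simp only [hK, if_neg hw]
  have hKcont : ∀ z, ‖z‖ ≤ R → z ∈ S.image pt → ContinuousAt K z := by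
    intro z _ hz
    rw [continuousAt_iff_punctured_nhds]
    obtain ⟨i, hi, rfl⟩ := Finset.mem_image.1 hz
    obtain ⟨c, hc⟩ := hHlim i hi
    have : K (pt i) = c := by
      simp only [hK, if_pos hz]
      exact hc.limUnder_eq
    rw [this]
    exact hc.congr' (hKev _).symm
  have hKd : ∀ z, ‖z‖ ≤ R → z ∉ S.image pt → DifferentiableAt ℂ K z := by
    intro z hz hzS
    have h3 : DifferentiableAt ℂ H z := hHd z hz (fun i hi e => hzS (e ▸ Finset.mem_image_of_mem pt hi))
    refine h3.congr_of_eventuallyEq ?_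
    have h2 : ((S.image pt : Finset ℂ) : Set ℂ)ᶜ ∈ 𝓝 z :=
      (S.image pt).finite_toSet.isClosed.isOpen_compl.mem_nhds hzS
    filter_upwards [h2] with w hw
    have hw' : w ∉ S.image pt := hw
    simp only [hK, if_neg hw']
  have hKint : (∮ z in C(0, R), K z) = 0 := by
    refine circleIntegral_eq_zero_of_differentiable_on_off_countable hR.le
      (s := (S.image pt : Finset ℂ)) (S.image pt).countable_toSet ?_ ?_
    · intro z hz
      have hz' : ‖z‖ ≤ R := by simpa using hz
      by_cases hzS : z ∈ S.image pt
      · exact (hKcont z hz' hzS).continuousWithinAt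
      · exact (hKd z hz' hzS).continuousAt.continuousWithinAt
    · intro z hz
      have hz' : ‖z‖ < R := by simpa using hz.1
      exact hKd z hz'.le hz.2
  have hsph : ∀ z ∈ Metric.sphere (0:ℂ) R, ‖z‖ = R ∧ ∀ i ∈ S, z ≠ pt i := by
    intro z hz
    have hz' : ‖z‖ = R := by simpa using hz
    exact ⟨hz', fun i hi e => absurd (hin i hi) (by rw [← e, hz']; exact lt_irrefl _)⟩
  have hKH : (∮ z in C(0, R), K z) = ∮ z in C(0, R), H z := by
    refine circleIntegral.integral_congr hR.le fun z hz => ?_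
    have : z ∉ S.image pt := by
      intro hm
      obtain ⟨i, hi, e⟩ := Finset.mem_image.1 hm
      exact (hsph z hz).2 i hi e.symm
    simp only [hK, if_neg this]
  have hPI : ∀ i ∈ S, CircleIntegrable (P i) 0 R := fun i hi =>
    ContinuousOn.circleIntegrable hR.le fun z hz =>
      (hP i hi z ((hsph z hz).2 i hi)).continuousAt.continuousWithinAt
  have hhI : CircleIntegrable h 0 R :=
    ContinuousOn.circleIntegrable hR.le fun z hz =>
      (hd z (hsph z hz).1.le (hsph z hz).2).continuousAt.continuousWithinAt
  have hSI : CircleIntegrable (fun z => ∑ i ∈ S, P i z) 0 R := by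
    refine ContinuousOn.circleIntegrable hR.le fun z hz => ?_
    exact (DifferentiableAt.fun_sum fun i hi => hP i hi z ((hsph z hz).2 i hi)).continuousAt.continuousWithinAt
  have h5 : (∮ z in C(0, R), H z) = (∮ z in C(0, R), h z) - ∑ i ∈ S, ∮ z in C(0, R), P i z := by
    rw [← circleIntegral.integral_fun_sum hPI, ← circleIntegral.integral_sub hhI hSI]
  rw [hKH, h5, Finset.sum_congr rfl hPint, ← Finset.mul_sum] at hKint
  exact sub_eq_zero.1 hKint

lemma ez_exp_taylor : ∃ E : ℂ → ℂ, AnalyticAt ℂ E 0 ∧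
    (∀ᶠ w in 𝓝 (0:ℂ), Complex.exp w = 1 + w + w^2/2 + w^3/6 + w^4 * E w) := by
  set f : ℂ → ℂ := fun w => Complex.exp w - (1 + w + w^2/2 + w^3/6) with hf
  have hfa : AnalyticAt ℂ f 0 := by fun_prop
  have h0 : iteratedDeriv 0 f = f := iteratedDeriv_zero
  have d1 : deriv f = fun w => Complex.exp w - (1 + w + w^2/2) := by
    funext w
    have : HasDerivAt f (Complex.exp w - (0 + 1 + (2:ℕ) * w^(2-1) * 1/2 + (3:ℕ) * w^(3-1) * 1/6)) w :=
      (Complex.hasDerivAt_exp w).sub ((((hasDerivAt_const w 1).add (hasDerivAt_id w)).add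
        (((hasDerivAt_id w).pow 2).div_const 2)).add (((hasDerivAt_id w).pow 3).div_const 6))
    rw [this.deriv]; push_cast; ring
  have d2 : deriv (fun w : ℂ => Complex.exp w - (1 + w + w^2/2)) = fun w => Complex.exp w - (1 + w) := by
    funext w
    have : HasDerivAt (fun w : ℂ => Complex.exp w - (1 + w + w^2/2)) (Complex.exp w - (0 + 1 + (2:ℕ) * w^(2-1) * 1/2)) w :=
      (Complex.hasDerivAt_exp w).sub ((((hasDerivAt_const w 1).add (hasDerivAt_id w)).add
        (((hasDerivAt_id w).pow 2).div_const 2)))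
    rw [this.deriv]; push_cast; ring
  have d3 : deriv (fun w : ℂ => Complex.exp w - (1 + w)) = fun w => Complex.exp w - 1 := by
    funext w
    have : HasDerivAt (fun w : ℂ => Complex.exp w - (1 + w)) (Complex.exp w - (0 + 1)) w :=
      (Complex.hasDerivAt_exp w).sub (((hasDerivAt_const w 1).add (hasDerivAt_id w)))
    rw [this.deriv]; ring
  have key : (4:ℕ) ≤ analyticOrderAt f 0 := by
    rw [natCast_le_analyticOrderAt_iff_iteratedDeriv_eq_zero hfa]
    intro i hi
    interval_cases i
    · simp [hf]
    · rw [iteratedDeriv_one, d1]; simp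
    · rw [iteratedDeriv_succ', iteratedDeriv_one, d1, d2]; simp
    · rw [iteratedDeriv_succ', iteratedDeriv_succ', iteratedDeriv_one, d1, d2, d3]; simp
  obtain ⟨g, hg, he⟩ := (natCast_le_analyticOrderAt hfa).1 key
  refine ⟨g, hg, ?_⟩
  filter_upwards [he] with w hw
  simp only [hf, sub_zero, smul_eq_mul] at hw
  linear_combination hw

/-- `E` with `exp w - 1 = w E w` and its Taylor polynomial. -/
lemma ez_exp_taylor' : ∃ E E3 : ℂ → ℂ, AnalyticAt ℂ E 0 ∧ AnalyticAt ℂ E3 0 ∧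
    (∀ w, E w = 1 + w/2 + w^2/6 + w^3 * E3 w) ∧
    (∀ᶠ w in 𝓝 (0:ℂ), Complex.exp w - 1 = w * E w) := by
  obtain ⟨g, hg, he⟩ := ez_exp_taylor
  refine ⟨fun w => 1 + w/2 + w^2/6 + w^3 * g w, g, by fun_prop, hg, fun _ => rfl, ?_⟩
  filter_upwards [he] with w hw
  rw [hw]; ring

lemma ez_simple_pole (A : ℂ → ℂ) (p α : ℂ) (hα : α ≠ 0) (hA : DifferentiableAt ℂ A p)
    (hp : qexp (α * p) = 1) :
    ∃ c, Tendsto (fun z => A z / (1 - qexp (α * z)) - (-(A p) / (2 * Real.pi * I * α)) * (z - p)⁻¹)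
      (𝓝[≠] p) (𝓝 c) := by
  obtain ⟨E, E3, hE, -, hEeq, hexp⟩ := ez_exp_taylor'
  have hE0 : E 0 = 1 := by rw [hEeq]; simp
  have hpi : (2 * Real.pi * I : ℂ) ≠ 0 := Complex.two_pi_I_ne_zero
  set L : ℂ → ℂ := fun z => 2 * Real.pi * I * α * (z - p) with hL
  have hLp : L p = 0 := by simp [hL]
  set B : ℂ → ℂ := fun z => -(A z) / (2 * Real.pi * I * α * E (L z)) with hB
  have hEL : DifferentiableAt ℂ (fun z => E (L z)) p := by
    have : DifferentiableAt ℂ E (L p) := by rw [hLp]; exact hE.differentiableAt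
    exact this.comp p (by fun_prop)
  have hBd : DifferentiableAt ℂ B p := by
    refine hA.neg.div (hEL.const_mul _) ?_
    rw [hLp, hE0]; simp [hα, hpi]
  have hBp : B p = -(A p) / (2 * Real.pi * I * α) := by
    simp only [hB, hLp, hE0, mul_one]
  refine ⟨deriv B p, ?_⟩
  have hs := hasDerivAt_iff_tendsto_slope.1 hBd.hasDerivAt
  refine hs.congr' ?_
  have hLt : Tendsto L (𝓝 p) (𝓝 0) := by
    have : ContinuousAt L p := by fun_prop
    rw [← hLp]; exact this
  have hne : ∀ᶠ z in 𝓝 p, E (L z) ≠ 0 := by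
    refine hEL.continuousAt.eventually_ne ?_
    rw [hLp, hE0]; exact one_ne_zero
  filter_upwards [nhdsWithin_le_nhds (hLt.eventually hexp), nhdsWithin_le_nhds hne, self_mem_nhdsWithin] with z hz1 hz2 hz3
  have hz3 : z - p ≠ 0 := sub_ne_zero.2 hz3
  have hq : qexp (α * z) = Complex.exp (L z) := by
    have : qexp (α * z) = qexp (α * p) * Complex.exp (L z) := by
      simp only [qexp, hL]; rw [← Complex.exp_add]; congr 1; ring
    rw [this, hp, one_mul]
  rw [slope_def_field, hBp, hq]
  have : 1 - Complex.exp (L z) = -(L z * E (L z)) := by linear_combination -hz1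
  rw [this]
  simp only [hB]
  have hLz : L z = 2 * Real.pi * I * α * (z - p) := rfl
  generalize E (L z) = e at *
  rw [hLz]
  field_simp

lemma ez_bernoulli : ∃ ρ : ℂ → ℂ, ContinuousAt ρ 0 ∧
    ∀ᶠ w in 𝓝 (0:ℂ), w ≠ 0 → (Complex.exp w - 1)⁻¹ = (1 - w/2 + w^2/12 + w^3 * ρ w) / w := by
  obtain ⟨E, E3, hE, hE3, hEeq, hexp⟩ := ez_exp_taylor'
  have hE0 : E 0 = 1 := by rw [hEeq]; simp
  refine ⟨fun w => -(-1/24 + w/72 + E3 w * (1 - w/2 + w^2/12)) / E w, ?_, ?_⟩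
  · have h1 := hE.continuousAt
    have h2 := hE3.continuousAt
    refine ContinuousAt.div (by fun_prop) h1 (by rw [hE0]; exact one_ne_zero)
  · have hne : ∀ᶠ w in 𝓝 (0:ℂ), E w ≠ 0 :=
      hE.continuousAt.eventually_ne (by rw [hE0]; exact one_ne_zero)
    filter_upwards [hne, hexp] with w h1 h2 h3
    rw [h2]
    have h4 := hEeq w
    generalize E w = e at *
    generalize E3 w = e3 at *
    field_simp
    rw [h4]
    ring

lemma ez_zero_pole (τ σ : ℂ) (hτ : τ ≠ 0) (hσ : σ ≠ 0) :
    ∃ c, Tendsto (fun z => qexp (τ * z) / ((1 - qexp z) * (1 - qexp (τ * z)) * (1 - qexp (σ * z)))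
      - (-1 / ((2 * Real.pi * I)^3 * τ * σ)) * (z⁻¹^3 + (2 * Real.pi * I) * ((-1 + τ - σ)/2) * z⁻¹^2
        + (2 * Real.pi * I)^2 * ((1 + τ^2 + σ^2)/12 + (-τ + σ - τ * σ)/4) * z⁻¹))
      (𝓝[≠] 0) (𝓝 c) := by
  obtain ⟨ρ, hρ, hexp⟩ := ez_bernoulli
  have hpi : (2 * Real.pi * I : ℂ) ≠ 0 := Complex.two_pi_I_ne_zero
  set v : ℂ := 2 * Real.pi * I with hv
  have hc : ∀ a : ℂ, ContinuousAt (fun z => ρ (a * z)) 0 := by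
    intro a
    have : ContinuousAt ρ (a * 0) := by simpa using hρ
    exact ContinuousAt.comp (g := ρ) (f := fun z => a * z) this (by fun_prop)
  have he : ∀ a : ℂ, a ≠ 0 → ∀ᶠ z in 𝓝[≠] (0:ℂ), (Complex.exp (a * z) - 1)⁻¹ =
      (1 - (a * z)/2 + (a * z)^2/12 + (a * z)^3 * ρ (a * z)) / (a * z) := by
    intro a ha
    have ht : Tendsto (fun z : ℂ => a * z) (𝓝 0) (𝓝 0) := by
      have : ContinuousAt (fun z : ℂ => a * z) 0 := by fun_prop
      simpa [ContinuousAt] using this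
    filter_upwards [nhdsWithin_le_nhds (ht.eventually hexp), self_mem_nhdsWithin] with z h1 h2
    exact h1 (mul_ne_zero ha h2)
  have h1 := he v hpi
  have h2 := he (-(v * τ)) (by simp [hpi, hτ])
  have h3 := he (v * σ) (by simp [hpi, hσ])
  have c1 := hc v
  have c2 := hc (-(v * τ))
  have c3 := hc (v * σ)
  -- product of the three truncated series with remainders
  set T : ℂ → ℂ → ℂ := fun a z => 1/12 * a^2 + a^3 * z * ρ (a * z) with hT
  have cT : ∀ a, ContinuousAt (T a) 0 := fun a =>
    continuousAt_const.add ((continuousAt_const.mul continuousAt_id).mul (hc a))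
  have cT1 := cT v
  have cT2 := cT (-(v * τ))
  have cT3 := cT (v * σ)
  -- F a z = 1 - a z / 2 + z^2 T a z
  set r1 : ℂ → ℂ := fun z => v^3 * ρ (v * z) + (-(v*τ))^3 * ρ (-(v*τ) * z) + (v*σ)^3 * ρ (v*σ*z)
    + (-v/2) * (T (-(v*τ)) z + T (v*σ) z) + (v*τ)/2 * (T v z + T (v*σ) z)
    + (-(v*σ)/2) * (T v z + T (-(v*τ)) z)
    + (v/2) * (v*τ/2) * (v*σ/2)
    + z * (T v z * T (-(v*τ)) z * (1 - v*σ*z/2) + T v z * T (v*σ) z * (1 + v*τ*z/2)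
      + T (-(v*τ)) z * T (v*σ) z * (1 - v*z/2)
      + (v*τ/2) * (-(v*σ)/2) * T v z + (-v/2) * (-(v*σ)/2) * T (-(v*τ)) z
      + (-v/2) * (v*τ/2) * T (v*σ) z)
    + z^3 * (T v z * T (-(v*τ)) z * T (v*σ) z) with hr1
  have gen : ∀ f1 f2 f3 g1 g2 g3 : ℂ → ℂ, ContinuousAt f1 0 → ContinuousAt f2 0 → ContinuousAt f3 0 →
      ContinuousAt g1 0 → ContinuousAt g2 0 → ContinuousAt g3 0 → ContinuousAt (fun z => v^3 * f1 z + (-(v*τ))^3 * f2 z + (v*σ)^3 * f3 z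
    + (-v/2) * (g2 z + g3 z) + (v*τ)/2 * (g1 z + g3 z)
    + (-(v*σ)/2) * (g1 z + g2 z)
    + (v/2) * (v*τ/2) * (v*σ/2)
    + z * (g1 z * g2 z * (1 - v*σ*z/2) + g1 z * g3 z * (1 + v*τ*z/2)
      + g2 z * g3 z * (1 - v*z/2)
      + (v*τ/2) * (-(v*σ)/2) * g1 z + (-v/2) * (-(v*σ)/2) * g2 z
      + (-v/2) * (v*τ/2) * g3 z)
    + z^3 * (g1 z * g2 z * g3 z)) 0 := by
    intro f1 f2 f3 g1 g2 g3 _ _ _ _ _ _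
    fun_prop
  have cr1 : ContinuousAt r1 0 := gen _ _ _ _ _ _ c1 c2 c3 cT1 cT2 cT3
  refine ⟨(-1 / (v^3 * τ * σ)) * r1 0, ?_⟩
  have ht : Tendsto (fun z => (-1 / (v^3 * τ * σ)) * r1 z) (𝓝[≠] 0) (𝓝 ((-1 / (v^3 * τ * σ)) * r1 0)) :=
    (cr1.tendsto.mono_left nhdsWithin_le_nhds).const_mul _
  refine ht.congr' ?_
  filter_upwards [h1, h2, h3, self_mem_nhdsWithin] with z e1 e2 e3 hz
  have hz : z ≠ 0 := hz
  have hq : qexp (τ * z) / ((1 - qexp z) * (1 - qexp (τ * z)) * (1 - qexp (σ * z)))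
      = (Complex.exp (v * z) - 1)⁻¹ * (Complex.exp (-(v*τ) * z) - 1)⁻¹ * (Complex.exp (v*σ*z) - 1)⁻¹ := by
    have q1 : qexp z = Complex.exp (v * z) := rfl
    have q2 : Complex.exp (-(v*τ) * z) = (qexp (τ * z))⁻¹ := by
      rw [qexp, ← Complex.exp_neg]; congr 1; simp only [hv]; ring
    have q3 : qexp (σ * z) = Complex.exp (v*σ*z) := by
      rw [qexp]; congr 1; simp only [hv]; ring
    rw [q1, q2, q3]
    have hne : qexp (τ * z) ≠ 0 := Complex.exp_ne_zero _
    have : (qexp (τ * z))⁻¹ - 1 = (1 - qexp (τ * z)) / qexp (τ * z) := by field_simp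
    rw [this, inv_div, ← neg_sub 1 (Complex.exp (v * z)), ← neg_sub 1 (Complex.exp (v * σ * z)),
      inv_neg, inv_neg, div_eq_mul_inv, div_eq_mul_inv, mul_inv, mul_inv]
    ring
  rw [hq, e1, e2, e3]
  simp only [hr1, hT]
  clear_value v
  generalize ρ (v * z) = ρ1
  generalize ρ (-(v*τ) * z) = ρ2
  generalize ρ (v*σ*z) = ρ3
  field_simp
  ring

lemma ez_radius (α L : ℝ) (hα : 0 < α) (hL : 0 < L) : ∃ L' > 0, ∃ δ > 0, ∀ a : ℝ, ∃ a' : ℝ,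
    a ≤ a' ∧ a' + L' ≤ a + L ∧ ∀ x, a' ≤ x → x ≤ a' + L' → ∀ n : ℤ, δ ≤ |x * α - n| := by
  obtain ⟨l, hl0, hlL, hl⟩ : ∃ l : ℝ, 0 < l ∧ l ≤ L ∧ α * l ≤ 1/2 := by
    refine ⟨min L (1/(2*α)), lt_min hL (by positivity), min_le_left _ _, ?_⟩
    calc α * min L (1/(2*α)) ≤ α * (1/(2*α)) := by gcongr; exact min_le_right _ _
      _ = 1/2 := by field_simp
  have hαl : 0 < α * l := mul_pos hα hl0
  refine ⟨l/4, by positivity, α * l / 8, by positivity, fun a => ?_⟩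
  by_cases h1 : ∀ x, a ≤ x → x ≤ a + l/4 → ∀ n : ℤ, α * l / 8 ≤ |x * α - n|
  · exact ⟨a, le_rfl, by linarith, h1⟩
  · push Not at h1
    obtain ⟨x1, hx1, hx1', n1, hn1⟩ := h1
    refine ⟨a + 3 * l/4, by linarith, by linarith, fun x hx hx' n => ?_⟩
    by_contra hlt
    push Not at hlt
    rw [abs_lt] at hn1 hlt
    have e1 : α * l / 2 ≤ x * α - x1 * α := by nlinarith
    have e2 : x * α - x1 * α ≤ α * l := by nlinarith
    have : n = n1 := by
      have i1 : (n:ℝ) - n1 < 1 := by linarith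
      have i2 : (n1:ℝ) - n < 1 := by linarith
      have i1' : n - n1 < 1 := by exact_mod_cast i1
      have i2' : n1 - n < 1 := by exact_mod_cast i2
      omega
    subst this
    linarith

lemma ez_radii (α β γ : ℝ) (hα : 0 < α) (hβ : 0 < β) (hγ : 0 < γ) : ∃ δ > 0, ∀ M : ℝ, ∃ R : ℝ,
    M ≤ R ∧ (∀ n : ℤ, δ ≤ |R * α - n|) ∧ (∀ n : ℤ, δ ≤ |R * β - n|) ∧ (∀ n : ℤ, δ ≤ |R * γ - n|) := by
  obtain ⟨L1, hL1, δ1, hδ1, h1⟩ := ez_radius α 1 hα one_pos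
  obtain ⟨L2, hL2, δ2, hδ2, h2⟩ := ez_radius β L1 hβ hL1
  obtain ⟨L3, hL3, δ3, hδ3, h3⟩ := ez_radius γ L2 hγ hL2
  refine ⟨min δ1 (min δ2 δ3), by positivity, fun M => ?_⟩
  obtain ⟨a1, ha1, hb1, hc1⟩ := h1 M
  obtain ⟨a2, ha2, hb2, hc2⟩ := h2 a1
  obtain ⟨a3, ha3, hb3, hc3⟩ := h3 a2
  refine ⟨a3, by linarith, fun n => ?_, fun n => ?_, fun n => ?_⟩
  · exact (min_le_left _ _).trans (hc1 a3 (by linarith) (by linarith) n)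
  · exact ((min_le_right _ _).trans (min_le_left _ _)).trans (hc2 a3 (by linarith) (by linarith) n)
  · exact ((min_le_right _ _).trans (min_le_right _ _)).trans (hc3 a3 (by linarith) (by linarith) n)

lemma ez_norm_qexp (z : ℂ) : ‖qexp z‖ = Real.exp (-(2 * Real.pi * z.im)) := by
  rw [qexp, Complex.norm_exp]
  congr 1
  simp

lemma ez_qexp_eq_one {z : ℂ} : qexp z = 1 ↔ ∃ n : ℤ, z = n := by
  rw [qexp, Complex.exp_eq_one_iff]
  have hpi : (2 * Real.pi * I : ℂ) ≠ 0 := Complex.two_pi_I_ne_zero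
  constructor
  · rintro ⟨n, hn⟩
    refine ⟨n, mul_left_cancel₀ hpi (by rw [hn]; ring)⟩
  · rintro ⟨n, rfl⟩
    exact ⟨n, by ring⟩

lemma ez_qexp_add_int (z : ℂ) (n : ℤ) : qexp (z + n) = qexp z := by
  have h : qexp (n : ℂ) = 1 := ez_qexp_eq_one.2 ⟨n, rfl⟩
  have : qexp (z + n) = qexp z * qexp n := by
    simp only [qexp]; rw [← Complex.exp_add]; congr 1; ring
  rw [this, h, mul_one]

lemma ez_continuous_qexp : Continuous qexp := by
  unfold qexp; fun_prop

lemma ez_denom (δ : ℝ) (hδ : 0 < δ) : ∃ c > 0, ∀ z : ℂ, (∀ n : ℤ, δ ≤ ‖z - n‖) →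
    c * max 1 ‖qexp z‖ ≤ ‖1 - qexp z‖ := by
  set K : Set ℂ := (Set.Icc (0:ℝ) 1 ×ℂ Set.Icc (-1:ℝ) 1) ∩ {z | ∀ n : ℤ, δ ≤ ‖z - n‖} with hK
  have hKc : IsCompact K := by
    refine (isCompact_Icc.reProdIm isCompact_Icc).inter_right ?_
    have : {z : ℂ | ∀ n : ℤ, δ ≤ ‖z - n‖} = ⋂ n : ℤ, {z : ℂ | δ ≤ ‖z - n‖} := by
      ext z; simp
    rw [this]
    exact isClosed_iInter fun n => isClosed_le continuous_const (by fun_prop)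
  have hcont : Continuous (fun z : ℂ => ‖1 - qexp z‖ / max 1 ‖qexp z‖) := by
    have := ez_continuous_qexp
    refine Continuous.div (by fun_prop) (by fun_prop) fun z => ?_
    positivity
  obtain ⟨c1, hc1, hb1⟩ : ∃ c > 0, ∀ z ∈ K, c ≤ ‖1 - qexp z‖ / max 1 ‖qexp z‖ := by
    rcases K.eq_empty_or_nonempty with he | hne
    · exact ⟨1, one_pos, by simp [he]⟩
    · obtain ⟨x, hx, hmin⟩ := hKc.exists_isMinOn hne hcont.continuousOn
      refine ⟨_, ?_, fun z hz => hmin hz⟩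
      have : 0 < ‖1 - qexp x‖ := by
        rw [norm_pos_iff, sub_ne_zero]
        intro h
        obtain ⟨n, hn⟩ := ez_qexp_eq_one.1 h.symm
        have := hx.2 n
        rw [hn] at this
        simp at this
        linarith
      positivity
  set c2 : ℝ := 1 - Real.exp (-(2 * Real.pi)) with hc2
  have hc2pos : 0 < c2 := by
    rw [hc2, sub_pos, Real.exp_lt_one_iff]
    have := Real.pi_pos; linarith
  refine ⟨min c1 c2, lt_min hc1 hc2pos, fun z hz => ?_⟩
  by_cases hzim : |z.im| ≤ 1
  · have hmem : z + ((-⌊z.re⌋ : ℤ) : ℂ) ∈ K := by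
      refine ⟨?_, fun n => ?_⟩
      · rw [Complex.mem_reProdIm]
        simp only [Complex.add_re, Complex.intCast_re, Complex.add_im, Complex.intCast_im, add_zero, Set.mem_Icc]
        push_cast
        refine ⟨⟨by linarith [Int.floor_le z.re], by linarith [Int.lt_floor_add_one z.re]⟩, abs_le.1 hzim⟩
      · have := hz (n + ⌊z.re⌋)
        convert this using 2
        push_cast; ring
    have h := hb1 _ hmem
    rw [ez_qexp_add_int] at h
    rw [le_div_iff₀ (by positivity)] at h
    exact le_trans (by gcongr; exact min_le_left _ _) h
  · push Not at hzim
    have hnorm := ez_norm_qexp z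
    have hpi := Real.pi_pos
    refine le_trans (b := c2 * max 1 ‖qexp z‖) (by gcongr; exact min_le_right _ _) ?_
    rcases lt_abs.1 hzim with h | h
    · have h1 : ‖qexp z‖ ≤ Real.exp (-(2 * Real.pi)) := by
        rw [hnorm]; apply Real.exp_le_exp.2; nlinarith
      have h2 : ‖qexp z‖ ≤ 1 := by linarith
      rw [max_eq_left h2, mul_one]
      have := norm_sub_norm_le (1:ℂ) (qexp z)
      rw [norm_one] at this
      linarith
    · have h1 : 1 ≤ ‖qexp z‖ * Real.exp (-(2 * Real.pi)) := by
        rw [hnorm, ← Real.exp_add]; apply Real.one_le_exp; nlinarith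
      have h2 : 1 ≤ ‖qexp z‖ := by
        rw [hnorm]; apply Real.one_le_exp; nlinarith
      rw [max_eq_right h2]
      have := norm_sub_norm_le (qexp z) 1
      rw [norm_one, norm_sub_rev] at this
      simp only [hc2]
      linarith

lemma ez_sector (τ σ : ℂ) (hτ : 0 < τ.im) (hσ : 0 < σ.im) (hd : 0 < τ.re * σ.im - τ.im * σ.re) :
    ∃ c > 0, ∀ z : ℂ, c * ‖z‖ ≤ max 0 (-z.im) + max 0 (τ * z).im + max 0 (-(σ * z).im) := by
  set s := (τ.re * σ.im - τ.im * σ.re) / σ.im with hs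
  set t := τ.im / σ.im with ht
  have hs0 : 0 < s := by positivity
  have ht0 : 0 < t := by positivity
  -- `‖z‖ ≤ A |Im z| + B |Im (σ z)|`
  set A : ℝ := 1 + |σ.re| / σ.im with hA
  set B : ℝ := 1 / σ.im with hB
  have hA0 : 0 < A := by positivity
  have hB0 : 0 < B := by positivity
  set D : ℝ := (A / s + B / t) * (1 + 2 * s + 2 * t) with hD
  have hD0 : 0 < D := by positivity
  refine ⟨1 / D, by positivity, fun z => ?_⟩
  set X := z.im with hX
  set Y := (σ * z).im with hY
  have hYeq : Y = σ.re * X + σ.im * z.re := by simp [hY, hX, Complex.mul_im]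
  have hTeq : (τ * z).im = s * X + t * Y := by
    rw [hYeq, hs, ht, Complex.mul_im]; field_simp; ring
  rw [hTeq]
  have hre : |z.re| ≤ |σ.re| / σ.im * |X| + B * |Y| := by
    have : z.re = B * Y - σ.re / σ.im * X := by rw [hYeq, hB]; field_simp; ring
    rw [this]
    refine (abs_sub _ _).trans ?_
    rw [abs_mul, abs_mul, abs_of_pos hB0, abs_div, abs_of_pos hσ]
    linarith
  have hz : ‖z‖ ≤ A * |X| + B * |Y| := by
    have := Complex.norm_le_abs_re_add_abs_im z
    rw [hA]; linarith
  set m := max 0 (-X) + max 0 (s * X + t * Y) + max 0 (-Y) with hm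
  have e1 : 0 ≤ max 0 (-X) := le_max_left _ _
  have e2 : -X ≤ max 0 (-X) := le_max_right _ _
  have e3 : 0 ≤ max 0 (-Y) := le_max_left _ _
  have e4 : -Y ≤ max 0 (-Y) := le_max_right _ _
  have e5 : 0 ≤ max 0 (s * X + t * Y) := le_max_left _ _
  have e6 : s * X + t * Y ≤ max 0 (s * X + t * Y) := le_max_right _ _
  have aX : |X| ≤ X + 2 * max 0 (-X) := by
    rcases abs_cases X with h | h <;> linarith
  have aY : |Y| ≤ Y + 2 * max 0 (-Y) := by
    rcases abs_cases Y with h | h <;> linarith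
  have hm0 : 0 ≤ m := by positivity
  have key : s * |X| + t * |Y| ≤ (1 + 2 * s + 2 * t) * m := by
    have i1 := mul_le_mul_of_nonneg_left aX hs0.le
    have i2 := mul_le_mul_of_nonneg_left aY ht0.le
    have j1 : s * max 0 (-X) ≤ s * m := by gcongr; rw [hm]; linarith
    have j2 : t * max 0 (-Y) ≤ t * m := by gcongr; rw [hm]; linarith
    have j3 : s * X + t * Y ≤ m := by rw [hm]; linarith
    nlinarith
  have hX1 : |X| ≤ (1 + 2 * s + 2 * t) * m / s := by
    rw [le_div_iff₀ hs0]; nlinarith [mul_nonneg ht0.le (abs_nonneg Y)]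
  have hY1 : |Y| ≤ (1 + 2 * s + 2 * t) * m / t := by
    rw [le_div_iff₀ ht0]; nlinarith [mul_nonneg hs0.le (abs_nonneg X)]
  have hfin : ‖z‖ ≤ D * m := by
    calc ‖z‖ ≤ A * |X| + B * |Y| := hz
      _ ≤ A * ((1 + 2 * s + 2 * t) * m / s) + B * ((1 + 2 * s + 2 * t) * m / t) := by gcongr
      _ = D * m := by rw [hD]; ring
  rw [one_div, inv_mul_le_iff₀ hD0]
  exact hfin

lemma ez_bound (τ σ : ℂ) (hτ : 0 < τ.im) (hσ : 0 < σ.im) (hd : 0 < τ.re * σ.im - τ.im * σ.re)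
    (δ : ℝ) (hδ : 0 < δ) : ∃ C > 0, ∃ κ > 0, ∀ z : ℂ,
      (∀ n : ℤ, δ ≤ ‖z - n‖) → (∀ n : ℤ, δ ≤ ‖τ * z - n‖) → (∀ n : ℤ, δ ≤ ‖σ * z - n‖) →
      ‖qexp (τ * z) / ((1 - qexp z) * (1 - qexp (τ * z)) * (1 - qexp (σ * z)))‖
        ≤ C * Real.exp (-(κ * ‖z‖)) := by
  obtain ⟨c, hc, hden⟩ := ez_denom δ hδ
  obtain ⟨κ, hκ, hsec⟩ := ez_sector τ σ hτ hσ hd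
  have hpi := Real.pi_pos
  refine ⟨1 / c^3, by positivity, 2 * Real.pi * κ, by positivity, fun z h1 h2 h3 => ?_⟩
  have d1 := hden _ h1
  have d2 := hden _ h2
  have d3 := hden _ h3
  have hs := hsec z
  set u1 := max 0 (-z.im)
  set u2 := max 0 (τ * z).im
  set u3 := max 0 (-(σ * z).im)
  have m1 : ∀ ζ : ℂ, Real.exp (2 * Real.pi * max 0 (-ζ.im)) ≤ max 1 ‖qexp ζ‖ := by
    intro ζ
    rw [ez_norm_qexp]
    rcases le_total 0 (-ζ.im) with h | h
    · rw [max_eq_right h]; refine le_trans (le_of_eq ?_) (le_max_right _ _); congr 1; ring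
    · rw [max_eq_left h]; simp
  have m2 : ‖qexp (τ * z)‖ * Real.exp (2 * Real.pi * u2) ≤ max 1 ‖qexp (τ * z)‖ := by
    rw [ez_norm_qexp, ← Real.exp_add]
    rcases le_total 0 (τ * z).im with h | h
    · simp only [u2, max_eq_right h]; simp
    · simp only [u2, max_eq_left h]; simp
  have d1' : c * Real.exp (2 * Real.pi * u1) ≤ ‖1 - qexp z‖ :=
    le_trans (by gcongr; exact m1 z) d1
  have d3' : c * Real.exp (2 * Real.pi * u3) ≤ ‖1 - qexp (σ * z)‖ :=
    le_trans (by gcongr; exact m1 (σ * z)) d3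
  have d2' : c * (‖qexp (τ * z)‖ * Real.exp (2 * Real.pi * u2)) ≤ ‖1 - qexp (τ * z)‖ :=
    le_trans (by gcongr) d2
  have hy : 0 < ‖qexp (τ * z)‖ := by rw [ez_norm_qexp]; positivity
  rw [norm_div, norm_mul, norm_mul]
  calc ‖qexp (τ * z)‖ / (‖1 - qexp z‖ * ‖1 - qexp (τ * z)‖ * ‖1 - qexp (σ * z)‖)
      ≤ ‖qexp (τ * z)‖ / ((c * Real.exp (2 * Real.pi * u1)) * (c * (‖qexp (τ * z)‖ * Real.exp (2 * Real.pi * u2)))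
        * (c * Real.exp (2 * Real.pi * u3))) := by gcongr
    _ = 1 / c^3 * Real.exp (-(2 * Real.pi * (u1 + u2 + u3))) := by
      rw [Real.exp_neg, mul_add, mul_add, Real.exp_add, Real.exp_add]
      field_simp
    _ ≤ 1 / c^3 * Real.exp (-(2 * Real.pi * κ * ‖z‖)) := by
      gcongr 1 / c^3 * Real.exp (-?_)
      nlinarith

lemma ez_ne_one {x : ℂ} (hx : x.im ≠ 0) {n : ℤ} (hn : n ≠ 0) : qexp (x * n) ≠ 1 := by
  intro h
  obtain ⟨m, hm⟩ := ez_qexp_eq_one.1 h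
  have := congrArg Complex.im hm
  simp at this
  tauto

lemma ez_qexp_differentiable : Differentiable ℂ qexp := by
  unfold qexp; fun_prop

/-- the finite set of nonzero integers of absolute value at most `K` -/
noncomputable def ezN (K : ℕ) : Finset ℤ := (Finset.Icc (-(K:ℤ)) K).erase 0

lemma ezN_mem {K : ℕ} {n : ℤ} : n ∈ ezN K ↔ n ≠ 0 ∧ |n| ≤ K := by
  simp [ezN, abs_le]

lemma ezN_sum (f : ℤ → ℂ) (K : ℕ) : ∑ n ∈ ezN K, f n =
    ∑ j ∈ Finset.range K, (f ((j + 1 : ℕ) : ℤ) + f (-((j + 1 : ℕ) : ℤ))) := by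
  induction K with
  | zero => simp [ezN]
  | succ K ih =>
    have : ezN (K+1) = insert ((K + 1 : ℕ) : ℤ) (insert (-((K + 1 : ℕ) : ℤ)) (ezN K)) := by
      ext n
      simp only [ezN, Finset.mem_insert, Finset.mem_erase, Finset.mem_Icc]
      push_cast
      omega
    rw [this, Finset.sum_insert, Finset.sum_insert, ih, Finset.sum_range_succ]
    · ring
    · rw [ezN_mem]; push_cast; rw [abs_neg]; rintro ⟨_, h⟩; rw [abs_of_nonneg (by positivity)] at h; omega
    · simp only [Finset.mem_insert, ezN_mem]; push_cast
      rintro (h | ⟨_, h⟩)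
      · omega
      · rw [abs_of_nonneg (by positivity)] at h; omega

/-- the integrand without the power of `z` -/
noncomputable def ezg (τ σ z : ℂ) : ℂ :=
  qexp (τ * z) / ((1 - qexp z) * (1 - qexp (τ * z)) * (1 - qexp (σ * z)))

/-- principal part of the integrand at zero -/
noncomputable def ezP (τ σ z : ℂ) : ℂ :=
  (-1 / ((2 * Real.pi * I)^3 * τ * σ)) * (z⁻¹^3 + (2 * Real.pi * I) * ((-1 + τ - σ)/2) * z⁻¹^2
        + (2 * Real.pi * I)^2 * ((1 + τ^2 + σ^2)/12 + (-τ + σ - τ * σ)/4) * z⁻¹)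

noncomputable def ezr1 (m : ℕ) (τ σ : ℂ) (n : ℤ) : ℂ :=
  -((n:ℂ)^m * (qexp (τ * n) / ((1 - qexp (τ * n)) * (1 - qexp (σ * n))))) / (2 * Real.pi * I * 1)

noncomputable def ezr2 (m : ℕ) (τ σ : ℂ) (n : ℤ) : ℂ :=
  -((n / τ : ℂ)^m * (qexp (τ * (n / τ)) / ((1 - qexp (n / τ)) * (1 - qexp (σ * (n / τ))))))
    / (2 * Real.pi * I * τ)

noncomputable def ezr3 (m : ℕ) (τ σ : ℂ) (n : ℤ) : ℂ :=
  -((n / σ : ℂ)^m * (qexp (τ * (n / σ)) / ((1 - qexp (n / σ)) * (1 - qexp (τ * (n / σ))))))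
    / (2 * Real.pi * I * σ)

lemma ez_floor_of_le {α z : ℂ} {n : ℤ} {R : ℝ} (h : α * z = n) (hz : ‖z‖ ≤ R) (hn : n ≠ 0) :
    n ∈ ezN ⌊R * ‖α‖⌋₊ := by
  rw [ezN_mem]
  refine ⟨hn, ?_⟩
  have h1 : |(n:ℝ)| ≤ R * ‖α‖ := by
    have : ‖(n:ℂ)‖ = |(n:ℝ)| := Complex.norm_intCast n
    rw [← this, ← h, norm_mul, mul_comm]
    gcongr
  have h2 : n.natAbs ≤ ⌊R * ‖α‖⌋₊ := by
    apply Nat.le_floor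
    rw [Nat.cast_natAbs, Int.cast_abs]; exact h1
  rw [Int.abs_eq_natAbs]
  exact_mod_cast h2

lemma ez_norm_lt {α : ℂ} (hα : α ≠ 0) {n : ℤ} {R : ℝ} (hR : 0 < R)
    (hn : n ∈ ezN ⌊R * ‖α‖⌋₊) (hne : ∀ n : ℤ, R * ‖α‖ ≠ n) : ‖(n:ℂ) / α‖ < R := by
  rw [ezN_mem] at hn
  have hα' : 0 < ‖α‖ := norm_pos_iff.2 hα
  rw [norm_div, div_lt_iff₀ hα', Complex.norm_intCast]
  have h1 : |(n:ℝ)| ≤ R * ‖α‖ := by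
    have : ((|n| : ℤ) : ℝ) ≤ (⌊R * ‖α‖⌋₊ : ℝ) := by exact_mod_cast hn.2
    rw [Int.cast_abs] at this
    exact this.trans (Nat.floor_le (by positivity))
  refine lt_of_le_of_ne h1 fun e => hne |n| ?_
  rw [Int.cast_abs, e]

lemma ez_finite (m : ℕ) (τ σ r0 : ℂ) (hτ : 0 < τ.im) (hσ : 0 < σ.im)
    (hστ : (σ / τ).im ≠ 0) (hτσ : (τ / σ).im ≠ 0) (hτi : (1 / τ).im ≠ 0) (hσi : (1 / σ).im ≠ 0)
    (R : ℝ) (hR : 0 < R)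
    (h0 : (∮ z in C(0, R), z^m * ezP τ σ z) = 2 * Real.pi * I * r0)
    (hR1 : ∀ n : ℤ, R * ‖(1:ℂ)‖ ≠ n) (hR2 : ∀ n : ℤ, R * ‖τ‖ ≠ n) (hR3 : ∀ n : ℤ, R * ‖σ‖ ≠ n) :
    (∮ z in C(0, R), z^m * ezg τ σ z) = 2 * Real.pi * I * (r0 + ∑ n ∈ ezN ⌊R * ‖(1:ℂ)‖⌋₊, ezr1 m τ σ n
      + ∑ n ∈ ezN ⌊R * ‖τ‖⌋₊, ezr2 m τ σ n + ∑ n ∈ ezN ⌊R * ‖σ‖⌋₊, ezr3 m τ σ n) := by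
  have hτ0 : τ ≠ 0 := by rintro rfl; simp at hτ
  have hσ0 : σ ≠ 0 := by rintro rfl; simp at hσ
  have q0 : qexp 0 = 1 := by simp [qexp]
  have qint : ∀ n : ℤ, qexp n = 1 := fun n => ez_qexp_eq_one.2 ⟨n, rfl⟩
  have F1 : ∀ n : ℤ, n ≠ 0 → qexp (n:ℂ) = 1 ∧ qexp (τ * n) ≠ 1 ∧ qexp (σ * n) ≠ 1 := fun n hn =>
    ⟨qint n, ez_ne_one hτ.ne' hn, ez_ne_one hσ.ne' hn⟩
  have F2 : ∀ n : ℤ, n ≠ 0 → qexp (n / τ:ℂ) ≠ 1 ∧ qexp (τ * (n / τ)) = 1 ∧ qexp (σ * (n/τ)) ≠ 1 := by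
    intro n hn
    refine ⟨?_, ?_, ?_⟩
    · have := ez_ne_one hτi hn; rwa [one_div_mul_eq_div] at this
    · rw [mul_div_cancel₀ _ hτ0]; exact qint n
    · have := ez_ne_one hστ hn
      rwa [show σ / τ * n = σ * (n / τ) by ring] at this
  have F3 : ∀ n : ℤ, n ≠ 0 → qexp (n / σ:ℂ) ≠ 1 ∧ qexp (τ * (n / σ)) ≠ 1 ∧ qexp (σ * (n/σ)) = 1 := by
    intro n hn
    refine ⟨?_, ?_, ?_⟩
    · have := ez_ne_one hσi hn; rwa [one_div_mul_eq_div] at this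
    · have := ez_ne_one hτσ hn
      rwa [show τ / σ * n = τ * (n / σ) by ring] at this
    · rw [mul_div_cancel₀ _ hσ0]; exact qint n
  have hqd : ∀ α z : ℂ, DifferentiableAt ℂ (fun z => qexp (α * z)) z := fun α z =>
    (ez_qexp_differentiable _).comp z (by fun_prop)
  have hqd1 : ∀ z : ℂ, DifferentiableAt ℂ (fun z => 1 - qexp z) z := fun z =>
    (differentiableAt_const _).sub (ez_qexp_differentiable _)
  have hqd2 : ∀ α z : ℂ, DifferentiableAt ℂ (fun z => 1 - qexp (α * z)) z := fun α z =>
    (differentiableAt_const _).sub (hqd _ _)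
  have hpow : ∀ z : ℂ, DifferentiableAt ℂ (fun z : ℂ => z^m) z := fun z => by fun_prop
  set S : Finset (Unit ⊕ (ℤ ⊕ (ℤ ⊕ ℤ))) := Finset.disjSum Finset.univ
    (Finset.disjSum (ezN ⌊R * ‖(1:ℂ)‖⌋₊) (Finset.disjSum (ezN ⌊R * ‖τ‖⌋₊) (ezN ⌊R * ‖σ‖⌋₊))) with hS
  set pt : Unit ⊕ (ℤ ⊕ (ℤ ⊕ ℤ)) → ℂ := Sum.elim (fun _ => 0) (Sum.elim (fun n => (n:ℂ))
    (Sum.elim (fun n => (n:ℂ)/τ) (fun n => (n:ℂ)/σ))) with hpt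
  set r : Unit ⊕ (ℤ ⊕ (ℤ ⊕ ℤ)) → ℂ := Sum.elim (fun _ => r0) (Sum.elim (ezr1 m τ σ)
    (Sum.elim (ezr2 m τ σ) (ezr3 m τ σ))) with hr
  set P : Unit ⊕ (ℤ ⊕ (ℤ ⊕ ℤ)) → ℂ → ℂ := Sum.elim (fun _ z => z^m * ezP τ σ z)
    (Sum.elim (fun n z => ezr1 m τ σ n * (z - n)⁻¹)
    (Sum.elim (fun n z => ezr2 m τ σ n * (z - n/τ)⁻¹) (fun n z => ezr3 m τ σ n * (z - n/σ)⁻¹))) with hPdef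
  have hsum : ∑ i ∈ S, r i = r0 + ∑ n ∈ ezN ⌊R * ‖(1:ℂ)‖⌋₊, ezr1 m τ σ n
      + ∑ n ∈ ezN ⌊R * ‖τ‖⌋₊, ezr2 m τ σ n + ∑ n ∈ ezN ⌊R * ‖σ‖⌋₊, ezr3 m τ σ n := by
    simp only [hS, hr, Finset.sum_disjSum, Sum.elim_inl, Sum.elim_inr, Finset.univ_unique,
      Finset.sum_singleton]
    ring
  rw [← hsum]
  have hin : ∀ i ∈ S, ‖pt i‖ < R := by
    rintro (u | n | n | n) hi
    · simpa [hpt] using hR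
    · have hn : n ∈ ezN ⌊R * ‖(1:ℂ)‖⌋₊ := by simpa [hS] using hi
      have := ez_norm_lt one_ne_zero hR hn hR1
      simpa [hpt] using this
    · have hn : n ∈ ezN ⌊R * ‖τ‖⌋₊ := by simpa [hS] using hi
      exact ez_norm_lt hτ0 hR hn hR2
    · have hn : n ∈ ezN ⌊R * ‖σ‖⌋₊ := by simpa [hS] using hi
      exact ez_norm_lt hσ0 hR hn hR3
  have hinv : ∀ p z : ℂ, z ≠ p → DifferentiableAt ℂ (fun z => (z - p)⁻¹) z := fun p z hz =>
    DifferentiableAt.inv (by fun_prop) (sub_ne_zero.2 hz)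
  have hsinv : ∀ p c : ℂ, ‖p‖ < R → (∮ z in C(0, R), c * (z - p)⁻¹) = 2 * Real.pi * I * c := by
    intro p c hp
    rw [circleIntegral.integral_const_mul, circleIntegral.integral_sub_inv_of_mem_ball (by simpa using hp)]
    ring
  refine ez_residue_sum S pt ?_ P r R hR hin ?_ ?_ _ ?_ ?_
  · -- injectivity
    have nz : ∀ {n : ℤ} {K : ℕ}, n ∈ ezN K → n ≠ 0 := fun h => (ezN_mem.1 h).1
    rintro (u | n | n | n) hi (u' | n' | n' | n') hj h <;>
      simp only [hS, Finset.mem_coe, Finset.inl_mem_disjSum, Finset.inr_mem_disjSum] at hi hj <;>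
      simp only [hpt, Sum.elim_inl, Sum.elim_inr] at h
    · rfl
    · have := (F1 n' (nz hj)).2.1; rw [← h, mul_zero] at this; exact absurd q0 this
    · have := (F2 n' (nz hj)).1; rw [← h] at this; exact absurd q0 this
    · have := (F3 n' (nz hj)).1; rw [← h] at this; exact absurd q0 this
    · have := (F1 n (nz hi)).2.1; rw [h, mul_zero] at this; exact absurd q0 this
    · have : n = n' := by exact_mod_cast h
      rw [this]
    · have := (F2 n' (nz hj)).1; rw [← h] at this; exact absurd (F1 n (nz hi)).1 this
    · have := (F3 n' (nz hj)).1; rw [← h] at this; exact absurd (F1 n (nz hi)).1 this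
    · have := (F2 n (nz hi)).1; rw [h] at this; exact absurd q0 this
    · have := (F2 n (nz hi)).1; rw [h] at this; exact absurd (F1 n' (nz hj)).1 this
    · have : n = n' := by
        have := (div_left_inj' hτ0).1 h
        exact_mod_cast this
      rw [this]
    · have := (F3 n' (nz hj)).2.1; rw [← h] at this; exact absurd (F2 n (nz hi)).2.1 this
    · have := (F3 n (nz hi)).1; rw [h] at this; exact absurd q0 this
    · have := (F3 n (nz hi)).1; rw [h] at this; exact absurd (F1 n' (nz hj)).1 this
    · have := (F3 n (nz hi)).2.1; rw [h] at this; exact absurd (F2 n' (nz hj)).2.1 this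
    · have : n = n' := by
        have := (div_left_inj' hσ0).1 h
        exact_mod_cast this
      rw [this]
  · rintro (u | n | n | n) hi z hz
    · have hz : z ≠ 0 := hz
      have h1 : DifferentiableAt ℂ (fun z : ℂ => z⁻¹) z := differentiableAt_inv hz
      simp only [hPdef, Sum.elim_inl, ezP]
      fun_prop
    · exact (hinv _ z hz).const_mul _
    · exact (hinv _ z hz).const_mul _
    · exact (hinv _ z hz).const_mul _
  · rintro (u | n | n | n) hi
    · exact h0
    · exact hsinv _ _ (hin _ hi)
    · exact hsinv _ _ (hin _ hi)
    · exact hsinv _ _ (hin _ hi)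
  · intro z hz hne
    have hz0 : z ≠ 0 := hne (Sum.inl ()) (by simp [hS])
    have a1 : qexp z ≠ 1 := by
      intro h
      obtain ⟨n, hn⟩ := ez_qexp_eq_one.1 h
      have n0 : n ≠ 0 := by rintro rfl; simp at hn; exact hz0 hn
      have := ez_floor_of_le (α := 1) (by rw [one_mul, hn]) hz n0
      exact hne (Sum.inr (Sum.inl n)) (by rw [hS, Finset.inr_mem_disjSum, Finset.inl_mem_disjSum]; exact this) hn
    have a2 : qexp (τ * z) ≠ 1 := by
      intro h
      obtain ⟨n, hn⟩ := ez_qexp_eq_one.1 h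
      have n0 : n ≠ 0 := by rintro rfl; simp [hτ0] at hn; exact hz0 hn
      have := ez_floor_of_le hn hz n0
      refine hne (Sum.inr (Sum.inr (Sum.inl n))) (by
        rw [hS, Finset.inr_mem_disjSum, Finset.inr_mem_disjSum, Finset.inl_mem_disjSum]; exact this) ?_
      show z = n / τ
      rw [← hn]; field_simp
    have a3 : qexp (σ * z) ≠ 1 := by
      intro h
      obtain ⟨n, hn⟩ := ez_qexp_eq_one.1 h
      have n0 : n ≠ 0 := by rintro rfl; simp [hσ0] at hn; exact hz0 hn
      have := ez_floor_of_le hn hz n0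
      refine hne (Sum.inr (Sum.inr (Sum.inr n))) (by
        rw [hS, Finset.inr_mem_disjSum, Finset.inr_mem_disjSum, Finset.inr_mem_disjSum]; exact this) ?_
      show z = n / σ
      rw [← hn]; field_simp
    exact (hpow z).mul ((hqd τ z).div (((hqd1 z).mul (hqd2 τ z)).mul (hqd2 σ z))
      (mul_ne_zero (mul_ne_zero (sub_ne_zero.2 a1.symm) (sub_ne_zero.2 a2.symm)) (sub_ne_zero.2 a3.symm)))
  · have nz : ∀ {n : ℤ} {K : ℕ}, n ∈ ezN K → n ≠ 0 := fun h => (ezN_mem.1 h).1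
    rintro (u | n | n | n) hi <;>
      simp only [hS, Finset.inl_mem_disjSum, Finset.inr_mem_disjSum] at hi
    · obtain ⟨c, hc⟩ := ez_zero_pole τ σ hτ0 hσ0
      refine ⟨0^m * c, ?_⟩
      have h1 : Tendsto (fun z : ℂ => z^m) (𝓝[≠] 0) (𝓝 (0^m)) :=
        (hpow 0).continuousAt.tendsto.mono_left nhdsWithin_le_nhds
      refine (h1.mul hc).congr fun z => ?_
      simp only [hPdef, Sum.elim_inl, ezP, ezg]
      ring
    · obtain ⟨f1, f2, f3⟩ := F1 n (nz hi)
      obtain ⟨c, hc⟩ := ez_simple_pole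
        (fun z => z^m * (qexp (τ * z) / ((1 - qexp (τ * z)) * (1 - qexp (σ * z))))) n 1 one_ne_zero
        ((hpow _).mul ((hqd τ _).div ((hqd2 τ _).mul (hqd2 σ _))
          (mul_ne_zero (sub_ne_zero.2 f2.symm) (sub_ne_zero.2 f3.symm)))) (by rw [one_mul]; exact f1)
      refine ⟨c, hc.congr fun z => ?_⟩
      simp only [hPdef, Sum.elim_inl, Sum.elim_inr, ezr1, ezg, one_mul, div_eq_mul_inv, mul_inv]
      ring
    · obtain ⟨f1, f2, f3⟩ := F2 n (nz hi)
      obtain ⟨c, hc⟩ := ez_simple_pole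
        (fun z => z^m * (qexp (τ * z) / ((1 - qexp z) * (1 - qexp (σ * z))))) (n/τ) τ hτ0
        ((hpow _).mul ((hqd τ _).div ((hqd1 _).mul (hqd2 σ _))
          (mul_ne_zero (sub_ne_zero.2 f1.symm) (sub_ne_zero.2 f3.symm)))) f2
      refine ⟨c, hc.congr fun z => ?_⟩
      simp only [hPdef, Sum.elim_inl, Sum.elim_inr, ezr2, ezg]
      congr 1
      simp only [div_eq_mul_inv, mul_inv]
      ring
    · obtain ⟨f1, f2, f3⟩ := F3 n (nz hi)
      obtain ⟨c, hc⟩ := ez_simple_pole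
        (fun z => z^m * (qexp (τ * z) / ((1 - qexp z) * (1 - qexp (τ * z))))) (n/σ) σ hσ0
        ((hpow _).mul ((hqd τ _).div ((hqd1 _).mul (hqd2 τ _))
          (mul_ne_zero (sub_ne_zero.2 f1.symm) (sub_ne_zero.2 f2.symm)))) f3
      refine ⟨c, hc.congr fun z => ?_⟩
      simp only [hPdef, Sum.elim_inr, ezr3, ezg]
      congr 1
      simp only [div_eq_mul_inv, mul_inv]
      ring

noncomputable def ezT (k : ℕ) (τ σ : ℂ) (j : ℕ) : ℂ :=
  (j : ℂ) ^ (k - 1) * (qexp τ ^ j - (-1 : ℂ) ^ k * qexp σ ^ j) /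
      ((1 - qexp τ ^ j) * (1 - qexp σ ^ j))

lemma ez_norm_lt_one {τ : ℂ} (hτ : 0 < τ.im) : ‖qexp τ‖ < 1 := by
  rw [ez_norm_qexp, Real.exp_lt_one_iff]
  have := Real.pi_pos
  have : 0 < 2 * Real.pi * τ.im := by positivity
  linarith

lemma ez_one_sub_pow {q : ℂ} (hq : ‖q‖ < 1) (j : ℕ) : 1 - ‖q‖ ≤ ‖1 - q ^ (j+1)‖ := by
  have h1 := norm_sub_norm_le (1:ℂ) (q^(j+1))
  rw [norm_one, norm_pow] at h1
  have : ‖q‖^(j+1) ≤ ‖q‖ := pow_le_of_le_one (norm_nonneg _) hq.le (by omega)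
  linarith

lemma ez_tendsto (k : ℕ) (τ σ : ℂ) (hτ : 0 < τ.im) (hσ : 0 < σ.im) :
    Tendsto (fun K : ℕ => ∑ j ∈ Finset.range K, ezT k τ σ (j+1)) atTop
      (𝓝 (∑' j : ℕ+, ezT k τ σ j)) := by
  have hq := ez_norm_lt_one hτ
  have hr := ez_norm_lt_one hσ
  have hsum : Summable (fun j : ℕ => ezT k τ σ (j+1)) := by
    have s1 : ∀ x : ℂ, ‖x‖ < 1 → Summable (fun j : ℕ => ((j+1 : ℕ) : ℝ)^(k-1) * ‖x‖^(j+1)) := by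
      intro x hx
      have := summable_pow_mul_geometric_of_norm_lt_one (R := ℝ) (k-1) (r := ‖x‖) (by simpa using hx)
      exact (summable_nat_add_iff 1).2 this
    have s2 := ((s1 _ hq).add (s1 _ hr)).mul_left (((1 - ‖qexp τ‖) * (1 - ‖qexp σ‖))⁻¹)
    refine Summable.of_norm_bounded s2 fun j => ?_
    rw [ezT, norm_div, norm_mul, norm_mul, norm_pow, Complex.norm_natCast, div_eq_inv_mul]
    have d1 := ez_one_sub_pow hq j
    have d2 := ez_one_sub_pow hr j
    have p1 : 0 < 1 - ‖qexp τ‖ := by linarith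
    have p2 : 0 < 1 - ‖qexp σ‖ := by linarith
    have n1 : ‖qexp τ ^ (j+1) - (-1 : ℂ) ^ k * qexp σ ^ (j+1)‖ ≤ ‖qexp τ‖^(j+1) + ‖qexp σ‖^(j+1) := by
      refine (norm_sub_le _ _).trans ?_
      simp
    rw [← mul_add]
    gcongr
  rw [tsum_pnat_eq_tsum_succ (f := fun j => ezT k τ σ j)]
  exact hsum.hasSum.tendsto_sum_nat

lemma ez_pair (m : ℕ) (n a b : ℂ) (ha : a ≠ 0) (hb : b ≠ 0) (ha1 : a ≠ 1) (hb1 : b ≠ 1) :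
    n^m * (a / ((1 - a) * (1 - b))) + (-n)^m * (a⁻¹ / ((1 - a⁻¹) * (1 - b⁻¹)))
      = n^m * (a - (-1)^(m+1) * b) / ((1 - a) * (1 - b)) := by
  have h1 : 1 - a ≠ 0 := sub_ne_zero.2 ha1.symm
  have h2 : 1 - b ≠ 0 := sub_ne_zero.2 hb1.symm
  have e : a⁻¹ / ((1 - a⁻¹) * (1 - b⁻¹)) = b / ((1 - a) * (1 - b)) := by
    have e1 : 1 - a⁻¹ = -(1 - a) / a := by field_simp; ring
    have e2 : 1 - b⁻¹ = -(1 - b) / b := by field_simp; ring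
    rw [e1, e2]; field_simp
  rw [e, neg_pow]; field_simp; ring

lemma ez_qexp_nat (x : ℂ) (n : ℕ) : qexp (x * n) = qexp x ^ n := by
  rw [qexp, qexp, ← Complex.exp_nat_mul]; congr 1; ring

lemma ez_qexp_neg (x : ℂ) : qexp (-x) = (qexp x)⁻¹ := by
  rw [qexp, qexp, ← Complex.exp_neg]; congr 1; ring

lemma ez_qexp_ne (x : ℂ) : qexp x ≠ 0 := Complex.exp_ne_zero _

lemma ez_pow_ne_one {x : ℂ} (hx : 0 < x.im) (j : ℕ) : qexp x ^ (j+1) ≠ 1 := by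
  intro h
  have := ez_one_sub_pow (ez_norm_lt_one hx) j
  rw [h] at this
  simp at this
  linarith [ez_norm_lt_one hx]

lemma ez_pair1 (m : ℕ) (τ σ : ℂ) (hτ : 0 < τ.im) (hσ : 0 < σ.im) (j : ℕ) :
    ezr1 m τ σ ((j+1:ℕ):ℤ) + ezr1 m τ σ (-((j+1:ℕ):ℤ)) =
      -(1/(2 * Real.pi * I)) * ezT (m+1) τ σ (j+1) := by
  have key := ez_pair m ((j+1:ℕ):ℂ) (qexp τ ^ (j+1)) (qexp σ ^ (j+1)) (pow_ne_zero _ (ez_qexp_ne _))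
    (pow_ne_zero _ (ez_qexp_ne _)) (ez_pow_ne_one hτ j) (ez_pow_ne_one hσ j)
  rw [ezT, Nat.add_sub_cancel, ← key]
  simp only [ezr1, Int.cast_neg, Int.cast_natCast, mul_neg, ez_qexp_neg, ez_qexp_nat]
  ring

lemma ez_pair2 (m : ℕ) (τ σ : ℂ) (hτ : 0 < (-1/τ).im) (hσ : 0 < (σ/τ).im) (hτ0 : τ ≠ 0) (j : ℕ) :
    ezr2 m τ σ ((j+1:ℕ):ℤ) + ezr2 m τ σ (-((j+1:ℕ):ℤ)) =
      (1/(2 * Real.pi * I)) * (τ ^ (-((m+1:ℕ):ℤ)) * ezT (m+1) (-1/τ) (σ/τ) (j+1)) := by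
  have key := ez_pair m ((j+1:ℕ):ℂ) (qexp (-1/τ) ^ (j+1)) (qexp (σ/τ) ^ (j+1)) (pow_ne_zero _ (ez_qexp_ne _))
    (pow_ne_zero _ (ez_qexp_ne _)) (ez_pow_ne_one hτ j) (ez_pow_ne_one hσ j)
  rw [ezT, Nat.add_sub_cancel, ← key]
  have ha1 := ez_pow_ne_one hτ j
  have hb1 := ez_pow_ne_one hσ j
  have ha0 : qexp (-1/τ) ^ (j+1) ≠ 0 := pow_ne_zero _ (ez_qexp_ne _)
  have qint : ∀ n : ℤ, qexp n = 1 := fun n => ez_qexp_eq_one.2 ⟨n, rfl⟩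
  simp only [ezr2, mul_div_cancel₀ _ hτ0, qint]
  simp only [Int.cast_neg, Int.cast_natCast]
  have e1 : qexp (((j+1:ℕ):ℂ)/τ) = (qexp (-1/τ) ^ (j+1))⁻¹ := by
    rw [← ez_qexp_nat, ← ez_qexp_neg]; congr 1; ring
  have e2 : qexp (-((j+1:ℕ):ℂ)/τ) = qexp (-1/τ) ^ (j+1) := by
    rw [← ez_qexp_nat]; congr 1; ring
  have e3 : qexp (σ * (((j+1:ℕ):ℂ)/τ)) = qexp (σ/τ) ^ (j+1) := by
    rw [← ez_qexp_nat]; congr 1; ring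
  have e4 : qexp (σ * (-((j+1:ℕ):ℂ)/τ)) = (qexp (σ/τ) ^ (j+1))⁻¹ := by
    rw [← ez_qexp_nat, ← ez_qexp_neg]; congr 1; ring
  rw [e1, e2, e3, e4, zpow_neg, zpow_natCast, pow_succ τ m, div_pow, div_pow]
  have hn0 : ((j+1:ℕ):ℂ) ≠ 0 := by exact_mod_cast Nat.succ_ne_zero j
  generalize qexp (-1/τ) ^ (j+1) = a at *
  generalize qexp (σ/τ) ^ (j+1) = b at *
  generalize ((j+1:ℕ):ℂ) = n at *
  have h1 : 1 - a ≠ 0 := sub_ne_zero.2 ha1.symm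
  have f1 : (1:ℂ) / ((1 - a⁻¹) * (1 - b)) = -(a / ((1 - a) * (1 - b))) := by
    have e1 : 1 - a⁻¹ = -(1 - a) / a := by field_simp; ring
    rw [e1]; simp only [div_eq_mul_inv, mul_inv, inv_neg, inv_inv, one_mul]; ring
  have f2 : (1:ℂ) / ((1 - a) * (1 - b⁻¹)) = -(a⁻¹ / ((1 - a⁻¹) * (1 - b⁻¹))) := by
    have e1 : 1 - a⁻¹ = -(1 - a) / a := by field_simp; ring
    rw [e1]; simp only [div_eq_mul_inv, mul_inv, inv_neg, inv_inv, one_mul]; field_simp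
  rw [f1, f2]
  simp only [div_eq_mul_inv, mul_inv]
  ring

lemma ez_pair3 (m : ℕ) (τ σ : ℂ) (hτ : 0 < (-(τ/σ)).im) (hσ : 0 < (-1/σ).im) (hσ0 : σ ≠ 0) (j : ℕ) :
    ezr3 m τ σ ((j+1:ℕ):ℤ) + ezr3 m τ σ (-((j+1:ℕ):ℤ)) =
      (1/(2 * Real.pi * I)) * ((-σ) ^ (-((m+1:ℕ):ℤ)) * ezT (m+1) (-(τ/σ)) (-1/σ) (j+1)) := by
  have key := ez_pair m ((j+1:ℕ):ℂ) (qexp (-(τ/σ)) ^ (j+1)) (qexp (-1/σ) ^ (j+1)) (pow_ne_zero _ (ez_qexp_ne _))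
    (pow_ne_zero _ (ez_qexp_ne _)) (ez_pow_ne_one hτ j) (ez_pow_ne_one hσ j)
  rw [ezT, Nat.add_sub_cancel, ← key]
  simp only [ezr3, Int.cast_neg, Int.cast_natCast]
  have e1 : qexp (((j+1:ℕ):ℂ)/σ) = (qexp (-1/σ) ^ (j+1))⁻¹ := by
    rw [← ez_qexp_nat, ← ez_qexp_neg]; congr 1; ring
  have e2 : qexp (-((j+1:ℕ):ℂ)/σ) = qexp (-1/σ) ^ (j+1) := by
    rw [← ez_qexp_nat]; congr 1; ring
  have e3 : qexp (τ * (((j+1:ℕ):ℂ)/σ)) = (qexp (-(τ/σ)) ^ (j+1))⁻¹ := by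
    rw [← ez_qexp_nat, ← ez_qexp_neg]; congr 1; ring
  have e4 : qexp (τ * (-((j+1:ℕ):ℂ)/σ)) = qexp (-(τ/σ)) ^ (j+1) := by
    rw [← ez_qexp_nat]; congr 1; ring
  rw [e1, e2, e3, e4, zpow_neg, zpow_natCast, pow_succ (-σ) m, div_pow, div_pow]
  generalize qexp (-(τ/σ)) ^ (j+1) = a
  generalize qexp (-1/σ) ^ (j+1) = b
  generalize ((j+1:ℕ):ℂ) = n
  rw [neg_pow σ m, neg_pow n m]
  have hs : ((-1:ℂ)^m)⁻¹ = (-1)^m := by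
    rw [← inv_pow]; norm_num
  have hs2 : ((-1:ℂ)^m) * (-1)^m = 1 := by rw [← mul_pow]; norm_num
  simp only [div_eq_mul_inv, mul_inv, hs, inv_neg]
  linear_combination (-(n^m * (σ^m)⁻¹ * σ⁻¹ * (2:ℂ)⁻¹ * (Real.pi:ℂ)⁻¹ * I⁻¹ *
    (a⁻¹ * (1-a⁻¹)⁻¹ * (1 - b⁻¹)⁻¹))) * hs2 * (-1)

lemma ez_ezP_int (τ σ : ℂ) (R : ℝ) (hR : 0 < R) (k : ℕ) (hk : k ∈ ({1, 2, 3} : Set ℕ)) :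
    (∮ z in C(0, R), z^(k-1) * ezP τ σ z) = 2 * Real.pi * I * ((-1 / ((2 * Real.pi * I)^3 * τ * σ)) *
      (if k = 1 then (2 * Real.pi * I)^2 * ((1 + τ^2 + σ^2)/12 + (-τ + σ - τ * σ)/4)
       else if k = 2 then (2 * Real.pi * I) * ((-1 + τ - σ)/2) else 1)) := by
  set c : ℂ := (-1 / ((2 * Real.pi * I)^3 * τ * σ)) with hc
  set b : ℂ := (2 * Real.pi * I)^2 * ((1 + τ^2 + σ^2)/12 + (-τ + σ - τ * σ)/4) with hb
  set a : ℂ := (2 * Real.pi * I) * ((-1 + τ - σ)/2) with ha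
  -- generic Laurent polynomial
  have gen : ∀ x y u v w : ℂ, (∮ z in C(0, R), (x * (z-0)^(-3:ℤ) + y * (z-0)^(-2:ℤ) + u * (z-0)⁻¹
      + v * (z-0)^(0:ℤ) + w * (z-0)^(1:ℤ))) = 2 * Real.pi * I * u := by
    intro x y u v w
    have hI : ∀ (x : ℂ) (n : ℤ), CircleIntegrable (fun z : ℂ => x * (z-0)^n) 0 R := by
      intro x n
      refine ContinuousOn.circleIntegrable hR.le fun z hz => ?_
      have hz : z - 0 ≠ 0 := by
        have : ‖z‖ = R := by simpa using hz
        rw [sub_zero, ← norm_pos_iff, this]; exact hR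
      have h1 : ContinuousAt (fun w : ℂ => (w-0)^n) z := ContinuousAt.zpow₀ (by fun_prop) n (Or.inl hz)
      exact (continuousAt_const.mul h1).continuousWithinAt
    have hI' : CircleIntegrable (fun z : ℂ => u * (z-0)⁻¹) 0 R := by
      simpa using hI u (-1)
    have i1 : CircleIntegrable (fun z : ℂ => x * (z-0)^(-3:ℤ) + y * (z-0)^(-2:ℤ)) 0 R :=
      (hI x _).add (hI y _)
    have i2 : CircleIntegrable (fun z : ℂ => x * (z-0)^(-3:ℤ) + y * (z-0)^(-2:ℤ) + u * (z-0)⁻¹) 0 R :=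
      i1.add hI'
    have i3 : CircleIntegrable (fun z : ℂ => x * (z-0)^(-3:ℤ) + y * (z-0)^(-2:ℤ) + u * (z-0)⁻¹
      + v * (z-0)^(0:ℤ)) 0 R := i2.add (hI v 0)
    rw [circleIntegral.integral_add i3 (hI w 1), circleIntegral.integral_add i2 (hI v 0),
      circleIntegral.integral_add i1 hI', circleIntegral.integral_add (hI x _) (hI y _)]
    simp only [circleIntegral.integral_const_mul]
    rw [circleIntegral.integral_sub_zpow_of_ne (by norm_num), circleIntegral.integral_sub_zpow_of_ne (by norm_num),
      circleIntegral.integral_sub_zpow_of_ne (by norm_num), circleIntegral.integral_sub_zpow_of_ne (by norm_num),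
      circleIntegral.integral_sub_center_inv _ hR.ne']
    ring
  have hsph : ∀ z ∈ Metric.sphere (0:ℂ) R, z ≠ 0 := by
    intro z hz
    have : ‖z‖ = R := by simpa using hz
    rw [← norm_pos_iff, this]; exact hR
  have z3 : ∀ z : ℂ, z^(-3:ℤ) = z⁻¹^3 := fun z => by
    rw [show (-3:ℤ) = -((3:ℕ):ℤ) by norm_num, zpow_neg, zpow_natCast, inv_pow]
  have z2 : ∀ z : ℂ, z^(-2:ℤ) = z⁻¹^2 := fun z => by
    rw [show (-2:ℤ) = -((2:ℕ):ℤ) by norm_num, zpow_neg, zpow_natCast, inv_pow]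
  simp only [Set.mem_insert_iff, Set.mem_singleton_iff] at hk
  rcases hk with rfl | rfl | rfl
  · rw [if_pos rfl, ← gen c (c * a) (c * b) 0 0]
    refine circleIntegral.integral_congr hR.le fun z hz => ?_
    have := hsph z hz
    simp only [ezP, ← hc, ← ha, ← hb, sub_zero, z3, z2, zpow_zero, zpow_one]
    field_simp
    try ring
  · rw [if_neg (by norm_num), if_pos rfl, ← gen 0 c (c * a) (c * b) 0]
    refine circleIntegral.integral_congr hR.le fun z hz => ?_
    have := hsph z hz
    simp only [ezP, ← hc, ← ha, ← hb, sub_zero, z3, z2, zpow_zero, zpow_one]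
    field_simp
    try ring
  · rw [if_neg (by norm_num), if_neg (by norm_num), ← gen 0 0 (c * 1) (c * a) (c * b)]
    refine circleIntegral.integral_congr hR.le fun z hz => ?_
    have := hsph z hz
    simp only [ezP, ← hc, ← ha, ← hb, sub_zero, z3, z2, zpow_zero, zpow_one]
    field_simp
    try ring

lemma ez_sum_zero (m : ℕ) (τ σ r0 : ℂ) (hτ : 0 < τ.im) (hσ : 0 < σ.im)
    (hστ : 0 < (σ / τ).im) (hτσ : 0 < (-(τ / σ)).im) (hτi : 0 < (-1 / τ).im) (hσi : 0 < (-1 / σ).im)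
    (h0 : ∀ R : ℝ, 0 < R → (∮ z in C(0, R), z^m * ezP τ σ z) = 2 * Real.pi * I * r0) :
    r0 + -(1/(2 * Real.pi * I)) * (∑' j : ℕ+, ezT (m+1) τ σ j)
      + (1/(2 * Real.pi * I)) * (τ ^ (-((m+1:ℕ):ℤ)) * ∑' j : ℕ+, ezT (m+1) (-1/τ) (σ/τ) j)
      + (1/(2 * Real.pi * I)) * ((-σ) ^ (-((m+1:ℕ):ℤ)) * ∑' j : ℕ+, ezT (m+1) (-(τ/σ)) (-1/σ) j) = 0 := by
  have hτ0 : τ ≠ 0 := by rintro rfl; simp at hτ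
  have hσ0 : σ ≠ 0 := by rintro rfl; simp at hσ
  have hτn : 0 < ‖τ‖ := norm_pos_iff.2 hτ0
  have hσn : 0 < ‖σ‖ := norm_pos_iff.2 hσ0
  have hd : 0 < τ.re * σ.im - τ.im * σ.re := by
    rw [Complex.div_im] at hστ
    have hn : 0 < Complex.normSq τ := Complex.normSq_pos.2 hτ0
    have : σ.im * τ.re / Complex.normSq τ - σ.re * τ.im / Complex.normSq τ =
      (τ.re * σ.im - τ.im * σ.re) / Complex.normSq τ := by ring
    rw [this] at hστ
    exact (div_pos_iff_of_pos_right hn).1 hστ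
  obtain ⟨δ, hδ, hrad⟩ := ez_radii ‖(1:ℂ)‖ ‖τ‖ ‖σ‖ (by simp) hτn hσn
  obtain ⟨C, hC, κ, hκ, hbound⟩ := ez_bound τ σ hτ hσ hd δ hδ
  choose Rf hRf hRf1 hRf2 hRf3 using fun N : ℕ => hrad (N + 1)
  have hRpos : ∀ N, 0 < Rf N := fun N => lt_of_lt_of_le (by positivity) (hRf N)
  have hRtop : Tendsto Rf atTop atTop := by
    refine tendsto_atTop_mono (fun N => ?_) tendsto_natCast_atTop_atTop
    linarith [hRf N]
  have hKtop : ∀ α : ℂ, 0 < ‖α‖ → Tendsto (fun N => ⌊Rf N * ‖α‖⌋₊) atTop atTop := fun α hα =>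
    tendsto_nat_floor_atTop.comp (hRtop.atTop_mul_const hα)
  have neof : ∀ {x : ℝ}, (∀ n : ℤ, δ ≤ |x - n|) → ∀ n : ℤ, x ≠ n := by
    intro x hx n e
    have := hx n
    rw [e, sub_self, abs_zero] at this
    linarith
  have hfin := fun N => ez_finite m τ σ r0 hτ hσ hστ.ne' (by
      rw [Complex.neg_im] at hτσ; linarith) (by
      rw [neg_div, Complex.neg_im] at hτi; linarith) (by
      rw [neg_div, Complex.neg_im] at hσi; linarith) (Rf N) (hRpos N) (h0 _ (hRpos N))
      (neof (hRf1 N)) (neof (hRf2 N)) (neof (hRf3 N))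
  have hlim0 : Tendsto (fun N => ∮ z in C(0, Rf N), z^m * ezg τ σ z) atTop (𝓝 0) := by
    have hb : ∀ N, ‖∮ z in C(0, Rf N), z^m * ezg τ σ z‖ ≤
        2 * Real.pi * C * ((Rf N)^(m+1) * Real.exp (-(κ * Rf N))) := by
      intro N
      have := circleIntegral.norm_integral_le_of_norm_le_const (f := fun z => z^m * ezg τ σ z)
        (c := 0) (hRpos N).le (C := (Rf N)^m * (C * Real.exp (-(κ * Rf N)))) (fun z hz => ?_)
      · refine this.trans (le_of_eq ?_); ring
      · have hz' : ‖z‖ = Rf N := by simpa using hz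
        have aux : ∀ α : ℂ, (∀ n : ℤ, δ ≤ |Rf N * ‖α‖ - n|) → ∀ n : ℤ, δ ≤ ‖α * z - n‖ := by
          intro α hα n
          refine (hα |n|).trans ?_
          have := abs_norm_sub_norm_le (α * z) (n:ℂ)
          rw [norm_mul, hz', Complex.norm_intCast, mul_comm] at this
          rw [Int.cast_abs]; exact this
        have := hbound z (by have := aux 1 (hRf1 N); simpa only [one_mul] using this)
          (aux τ (hRf2 N)) (aux σ (hRf3 N))
        rw [norm_mul, norm_pow, hz']
        rw [hz'] at this
        exact mul_le_mul_of_nonneg_left this (by have := hRpos N; positivity)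
    have hlim : Tendsto (fun x : ℝ => x^(m+1) * Real.exp (-(κ * x))) atTop (𝓝 0) := by
      have h := (Real.tendsto_pow_mul_exp_neg_atTop_nhds_zero (m+1)).comp
        (tendsto_id.const_mul_atTop hκ)
      have h2 := h.const_mul ((κ^(m+1))⁻¹)
      rw [mul_zero] at h2
      refine h2.congr fun x => ?_
      simp only [Function.comp, id, mul_pow]
      field_simp
    have h3 := (hlim.comp hRtop).const_mul (2 * Real.pi * C)
    rw [mul_zero] at h3
    exact squeeze_zero_norm hb h3
  have s1 : ∀ K, ∑ n ∈ ezN K, ezr1 m τ σ n = -(1/(2 * Real.pi * I)) * ∑ j ∈ Finset.range K, ezT (m+1) τ σ (j+1) := by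
    intro K
    rw [ezN_sum, Finset.mul_sum]
    exact Finset.sum_congr rfl fun j _ => ez_pair1 m τ σ hτ hσ j
  have s2 : ∀ K, ∑ n ∈ ezN K, ezr2 m τ σ n = (1/(2 * Real.pi * I)) * (τ ^ (-((m+1:ℕ):ℤ)) *
      ∑ j ∈ Finset.range K, ezT (m+1) (-1/τ) (σ/τ) (j+1)) := by
    intro K
    rw [ezN_sum, Finset.mul_sum, Finset.mul_sum]
    exact Finset.sum_congr rfl fun j _ => ez_pair2 m τ σ hτi hστ hτ0 j
  have s3 : ∀ K, ∑ n ∈ ezN K, ezr3 m τ σ n = (1/(2 * Real.pi * I)) * ((-σ) ^ (-((m+1:ℕ):ℤ)) *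
      ∑ j ∈ Finset.range K, ezT (m+1) (-(τ/σ)) (-1/σ) (j+1)) := by
    intro K
    rw [ezN_sum, Finset.mul_sum, Finset.mul_sum]
    exact Finset.sum_congr rfl fun j _ => ez_pair3 m τ σ hτσ hσi hσ0 j
  have t1 := ((ez_tendsto (m+1) τ σ hτ hσ).comp (hKtop 1 (by simp))).const_mul (-(1/(2 * Real.pi * I)))
  have t2 := (((ez_tendsto (m+1) (-1/τ) (σ/τ) hτi hστ).comp (hKtop τ hτn)).const_mul
    (τ ^ (-((m+1:ℕ):ℤ)))).const_mul (1/(2 * Real.pi * I))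
  have t3 := (((ez_tendsto (m+1) (-(τ/σ)) (-1/σ) hτσ hσi).comp (hKtop σ hσn)).const_mul
    ((-σ) ^ (-((m+1:ℕ):ℤ)))).const_mul (1/(2 * Real.pi * I))
  have t4 := (((tendsto_const_nhds (x := r0)).add t1).add t2).add t3
  have t5 := t4.const_mul (2 * Real.pi * I)
  have t6 := tendsto_nhds_unique (hlim0.congr fun N => by
    rw [hfin N, s1, s2, s3]; rfl) t5
  have hpi : (2 * Real.pi * I : ℂ) ≠ 0 := Complex.two_pi_I_ne_zero
  exact (mul_eq_zero.1 t6.symm).resolve_left hpi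

/-- modular three-term relation with anomaly for `Z_k`, `k ∈ {1,2,3}`:
`Z_k(τ,σ) = τ^{-k} Z_k(-1/τ,σ/τ) + (-σ)^{-k} Z_k(-τ/σ,-1/σ) + iπ a_k`. -/
theorem ellipticZeta_modular_three_term_low
    (k : ℕ) (hk : k ∈ ({1, 2, 3} : Set ℕ)) (τ σ : ℂ)
    (hτ : τ ∈ UHP) (hσ : σ ∈ UHP) (hστ : σ / τ ∈ UHP) :
    ellipticZeta k τ σ =
      τ ^ (-(k : ℤ)) * ellipticZeta k (-1 / τ) (σ / τ) +
      (-σ) ^ (-(k : ℤ)) * ellipticZeta k (-(τ / σ)) (-1 / σ) +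
      (Real.pi : ℂ) * Complex.I *
        (if k = 1 then
            -1 / 2 + 1 / (2 * τ) - 1 / (2 * σ) + σ / (6 * τ) + τ / (6 * σ) + 1 / (6 * τ * σ)
         else if k = 2 then -1 / τ + 1 / σ - 1 / (τ * σ)
         else 1 / (τ * σ)) := by
  have hτ : 0 < τ.im := hτ
  have hσ : 0 < σ.im := hσ
  have hστ : 0 < (σ / τ).im := hστ
  have inv_im : ∀ x : ℂ, 0 < x.im → 0 < (-1 / x).im := by
    intro x hx
    have hx0 : x ≠ 0 := by rintro rfl; simp at hx
    have hn : 0 < Complex.normSq x := Complex.normSq_pos.2 hx0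
    rw [neg_div, one_div, Complex.neg_im, Complex.inv_im, neg_div, neg_neg]
    positivity
  have hτσ : 0 < (-(τ / σ)).im := by
    have := inv_im _ hστ
    rwa [show -1 / (σ / τ) = -(τ / σ) by rw [div_div_eq_mul_div]; ring] at this
  have hτ0 : τ ≠ 0 := by rintro rfl; simp at hτ
  have hσ0 : σ ≠ 0 := by rintro rfl; simp at hσ
  have hpi : (2 * Real.pi * I : ℂ) ≠ 0 := Complex.two_pi_I_ne_zero
  have hp : (Real.pi : ℂ) ≠ 0 := by exact_mod_cast Real.pi_ne_zero
  have hk1 : k - 1 + 1 = k := by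
    simp only [Set.mem_insert_iff, Set.mem_singleton_iff] at hk; omega
  have key := ez_sum_zero (k-1) τ σ _ hτ hσ hστ hτσ (inv_im _ hτ) (inv_im _ hσ)
    (fun R hR => ez_ezP_int τ σ R hR k hk)
  rw [hk1] at key
  have hZ : ∀ a b : ℂ, ellipticZeta k a b =
    -((2 * (Real.pi : ℂ) * Complex.I) ^ k / (Nat.factorial (k - 1) : ℂ)) * ∑' j : ℕ+, ezT k a b j := fun _ _ => rfl
  rw [hZ, hZ, hZ]
  generalize (∑' j : ℕ+, ezT k τ σ j) = X at *
  generalize (∑' j : ℕ+, ezT k (-1/τ) (σ/τ) j) = Y at *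
  generalize (∑' j : ℕ+, ezT k (-(τ/σ)) (-1/σ) j) = W at *
  generalize τ ^ (-(k:ℤ)) = A at *
  generalize (-σ) ^ (-(k:ℤ)) = B at *
  generalize hv : (2 * Real.pi * I : ℂ) = v at *
  have hX : X = A * Y + B * W + v * ((-1 / (v^3 * τ * σ)) *
      (if k = 1 then v^2 * ((1 + τ^2 + σ^2)/12 + (-τ + σ - τ * σ)/4)
       else if k = 2 then v * ((-1 + τ - σ)/2) else 1)) := by
    have h2 : v * (1 / v) = 1 := by field_simp
    linear_combination (-v) * key + (A * Y + B * W - X) * h2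
  have hpv : (Real.pi : ℂ) * I = v / 2 := by rw [← hv]; ring
  rw [hX, hpv]
  simp only [Set.mem_insert_iff, Set.mem_singleton_iff] at hk
  rcases hk with rfl | rfl | rfl
  · norm_num
    field_simp
    ring
  · norm_num
    field_simp
    ring
  · norm_num [Nat.factorial]
    field_simp
    ring
end

section
/- Let k ≥ 5 be an odd integer and τ, σ ∈ H. Then the series ∑'_{(a,b,c)} ε(a,b)/(aτ + bσ + c)^k, taken over all triples (a,b,c) ∈ ℤ³ with (a,b,c) ≠ (0,0,0), converges absolutely and equals Z_k(τ,σ). Here ε(a,b) = (ε(a)+ε(b))/2 where ε(n) denotes the sign of the integer n (ε(n) = 1, 0, −1 according as n > 0, n = 0, n < 0); in particular ε(a,b) = 0 whenever a and b have strictly opposite signs. -/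
open Complex Filter Topology

namespace EZL

lemma summable_int_aux (b : ℝ) (hb : 1 < b) : Summable (fun n : ℤ => (|(n : ℝ)| + 1) ^ (-b)) := by
  have h : Summable (fun n : ℕ => ((n : ℝ) + 1) ^ (-b)) := by
    have := (summable_nat_add_iff 1).mpr (Real.summable_nat_rpow.mpr (show -b < -1 by linarith))
    simpa using this
  refine Summable.of_nat_of_neg ?_ ?_
  · simpa using h
  · simpa using h

lemma sign_aux (a b : ℤ) (h : a.sign + b.sign ≠ 0) :
    ((0 ≤ a ∧ 0 ≤ b) ∨ (a ≤ 0 ∧ b ≤ 0)) ∧ 1 ≤ |a| + |b| := by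
  rcases lt_trichotomy a 0 with ha | ha | ha <;> rcases lt_trichotomy b 0 with hb | hb | hb <;>
    simp_all [Int.sign_eq_one_of_pos, Int.sign_eq_neg_one_of_neg] <;>
    grind

lemma lower_bound (τ σ : ℂ) (hτ : 0 < τ.im) (hσ : 0 < σ.im) :
    ∃ δ : ℝ, 0 < δ ∧ ∀ a b c : ℤ, a.sign + b.sign ≠ 0 →
      δ * (|(a : ℝ)| + |(b : ℝ)| + |(c : ℝ)| + 3) ≤ ‖(a : ℂ) * τ + b * σ + c‖ := by
  set y := min τ.im σ.im with hy
  have hy0 : 0 < y := lt_min hτ hσ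
  set M := ‖τ‖ + ‖σ‖ with hM
  have hM0 : 0 ≤ M := by positivity
  refine ⟨((4 + M) / y + 1)⁻¹, by positivity, fun a b c h => ?_⟩
  obtain ⟨hs, h1⟩ := sign_aux a b h
  have h1' : (1 : ℝ) ≤ |(a : ℝ)| + |(b : ℝ)| := by exact_mod_cast h1
  set z := (a : ℂ) * τ + b * σ + c with hz
  have him : z.im = a * τ.im + b * σ.im := by simp [hz]
  have hyτ : y ≤ τ.im := min_le_left _ _
  have hyσ : y ≤ σ.im := min_le_right _ _
  have hN : y * (|(a : ℝ)| + |(b : ℝ)|) ≤ ‖z‖ := by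
    refine le_trans ?_ (Complex.abs_im_le_norm z)
    rw [him]
    rcases hs with ⟨ha, hb⟩ | ⟨ha, hb⟩
    · have ha' : (0 : ℝ) ≤ a := by exact_mod_cast ha
      have hb' : (0 : ℝ) ≤ b := by exact_mod_cast hb
      rw [abs_of_nonneg ha', abs_of_nonneg hb']
      refine le_trans ?_ (le_abs_self _)
      nlinarith
    · have ha' : (a : ℝ) ≤ 0 := by exact_mod_cast ha
      have hb' : (b : ℝ) ≤ 0 := by exact_mod_cast hb
      rw [abs_of_nonpos ha', abs_of_nonpos hb']
      refine le_trans ?_ (neg_le_abs _)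
      nlinarith
  have hc : |(c : ℝ)| ≤ ‖z‖ + (|(a : ℝ)| + |(b : ℝ)|) * M := by
    have e : (c : ℂ) = z - (a : ℂ) * τ - b * σ := by rw [hz]; ring
    have : ‖(c : ℂ)‖ ≤ ‖z‖ + ‖(a : ℂ) * τ‖ + ‖(b : ℂ) * σ‖ := by
      rw [e]
      exact (norm_sub_le _ _).trans (by gcongr; exact norm_sub_le _ _)
    simp only [norm_mul, Complex.norm_intCast] at this
    have h3 := mul_nonneg (abs_nonneg (a : ℝ)) (norm_nonneg σ)
    have h4 := mul_nonneg (abs_nonneg (b : ℝ)) (norm_nonneg τ)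
    rw [hM]; nlinarith
  rw [inv_mul_le_iff₀ (by positivity)]
  have h5 : (|(a : ℝ)| + |(b : ℝ)|) * (4 + M) ≤ (4 + M) / y * ‖z‖ := by
    rw [div_mul_eq_mul_div, le_div_iff₀ hy0]
    nlinarith
  nlinarith

/-- The summand. -/
noncomputable def f (k : ℕ) (τ σ : ℂ) (v : ℤ × ℤ × ℤ) : ℂ :=
  (((v.1.sign + v.2.1.sign : ℤ) : ℂ) / 2) / ((v.1 : ℂ) * τ + (v.2.1 : ℂ) * σ + (v.2.2 : ℂ)) ^ k

lemma summable_f (k : ℕ) (hk : 5 ≤ k) (τ σ : ℂ) (hτ : 0 < τ.im) (hσ : 0 < σ.im) :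
    Summable (fun v => ‖f k τ σ v‖) := by
  obtain ⟨δ, hδ, H⟩ := lower_bound τ σ hτ hσ
  have hb : (1 : ℝ) < (k : ℝ) / 3 := by
    have : (5 : ℝ) ≤ k := by exact_mod_cast hk
    linarith
  have hw := summable_int_aux _ hb
  have hw0 : ∀ n : ℤ, 0 ≤ (|(n : ℝ)| + 1) ^ (-((k : ℝ) / 3)) := fun n => by positivity
  have h3 := hw.mul_of_nonneg (hw.mul_of_nonneg hw hw0 hw0) hw0
    (fun p => mul_nonneg (hw0 p.1) (hw0 p.2))
  refine Summable.of_nonneg_of_le (fun _ => norm_nonneg _) ?_ (h3.mul_left ((δ ^ k)⁻¹))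
  rintro ⟨a, b, c⟩
  simp only [f]
  by_cases h : a.sign + b.sign = 0
  · simp only [h]
    simp
    positivity
  have hL := H a b c h
  rw [norm_div, norm_div, norm_pow]
  have hs : ‖((a.sign + b.sign : ℤ) : ℂ)‖ / ‖(2 : ℂ)‖ ≤ 1 := by
    rw [Complex.norm_intCast, Complex.norm_ofNat, div_le_one (by norm_num)]
    have : |a.sign + b.sign| ≤ 2 := by
      rcases lt_trichotomy a 0 with ha | ha | ha <;> rcases lt_trichotomy b 0 with hb | hb | hb <;>
      simp [*, Int.sign_eq_one_of_pos, Int.sign_eq_neg_one_of_neg]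
    exact_mod_cast this
  set A := |(a : ℝ)| + 1 with hA
  set B := |(b : ℝ)| + 1 with hB
  set C := |(c : ℝ)| + 1 with hC
  have A1 : 0 < A := by positivity
  have B1 : 0 < B := by positivity
  have C1 : 0 < C := by positivity
  have hL' : δ * (A + B + C) ≤ ‖(a : ℂ) * τ + b * σ + c‖ := by
    convert hL using 2; rw [hA, hB, hC]; ring
  have key : (A * (B * C)) ^ ((k : ℝ) / 3) ≤ (A + B + C) ^ k := by
    have : A * (B * C) ≤ (A + B + C) ^ (3 : ℝ) := by
      norm_cast
      have : (A + B + C) ^ 3 = (A + B + C) * ((A + B + C) * (A + B + C)) := by ring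
      rw [this]
      gcongr <;> linarith
    calc (A * (B * C)) ^ ((k : ℝ) / 3) ≤ ((A + B + C) ^ (3 : ℝ)) ^ ((k : ℝ) / 3) := by gcongr
      _ = (A + B + C) ^ k := by
        rw [← Real.rpow_mul (by positivity), ← Real.rpow_natCast]
        congr 1; ring
  calc _ ≤ 1 / (δ * (A + B + C)) ^ k := by gcongr
    _ = (δ ^ k)⁻¹ * ((A + B + C) ^ k)⁻¹ := by rw [mul_pow, one_div, mul_inv]
    _ ≤ (δ ^ k)⁻¹ * ((A * (B * C)) ^ ((k : ℝ) / 3))⁻¹ := by gcongr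
    _ = _ := by
      rw [← Real.rpow_neg (by positivity), Real.mul_rpow (by positivity) (by positivity),
        Real.mul_rpow (by positivity) (by positivity)]

lemma hasSum_congr {ι α : Type*} [AddCommMonoid α] [TopologicalSpace α] {f g : ι → α} {a b : α}
    (h : HasSum f a) (hf : ∀ i, g i = f i) (ha : b = a) : HasSum g b := by
  have : g = f := funext hf
  rw [this, ha]
  exact h

lemma hasSum_sgn {𝕜 : Type*} [NormedField 𝕜] [CompleteSpace 𝕜] (x : 𝕜) (hx : ‖x‖ < 1) :
    HasSum (fun m : ℕ => (((m : ℤ).sign : ℤ) : 𝕜) * x ^ m) (x / (1 - x)) := by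
  rw [← hasSum_nat_add_iff' 1]
  have := (hasSum_geometric_of_norm_lt_one hx).mul_left x
  simp only [Finset.sum_range_one]
  refine hasSum_congr this (fun n => ?_) ?_
  · rw [Int.sign_eq_one_of_pos (by positivity)]
    push_cast; ring
  · simp [div_eq_mul_inv]

lemma norm_sgn (m : ℕ) : ‖(((m : ℤ).sign : ℤ) : ℂ)‖ = (((m : ℤ).sign : ℤ) : ℝ) := by
  rcases m with _ | m
  · simp
  · rw [Int.sign_eq_one_of_pos (by positivity)]; simp

lemma sgn_nonneg (m : ℕ) : (0 : ℝ) ≤ (((m : ℤ).sign : ℤ) : ℝ) := by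
  rw [← norm_sgn]; positivity

lemma hasSum_two_real (x y : ℝ) (hx0 : 0 ≤ x) (hy0 : 0 ≤ y) (hx : x < 1) (hy : y < 1) :
    HasSum (fun p : ℕ × ℕ =>
      (((p.1 : ℤ).sign + (p.2 : ℤ).sign : ℤ) : ℝ) * (x ^ p.1 * y ^ p.2))
      ((x + y) / ((1 - x) * (1 - y))) := by
  have nx : ‖x‖ < 1 := by rwa [Real.norm_of_nonneg hx0]
  have ny : ‖y‖ < 1 := by rwa [Real.norm_of_nonneg hy0]
  have sx := hasSum_sgn x nx
  have sy := hasSum_sgn y ny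
  have gx := hasSum_geometric_of_norm_lt_one nx
  have gy := hasSum_geometric_of_norm_lt_one ny
  have p1 := sx.mul gy (sx.summable.mul_of_nonneg gy.summable
    (fun m => mul_nonneg (sgn_nonneg m) (pow_nonneg hx0 m)) (fun m => pow_nonneg hy0 m))
  have p2 := gx.mul sy (gx.summable.mul_of_nonneg sy.summable
    (fun m => pow_nonneg hx0 m) (fun m => mul_nonneg (sgn_nonneg m) (pow_nonneg hy0 m)))
  refine hasSum_congr (p1.add p2) (fun p => ?_) ?_
  · push_cast; ring
  · have : 1 - x ≠ 0 := by linarith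
    have : 1 - y ≠ 0 := by linarith
    field_simp

lemma hasSum_mul_aux (u v : ℕ → ℂ) (a b : ℂ) (hu : HasSum u a) (hv : HasSum v b) :
    HasSum (fun p : ℕ × ℕ => u p.1 * v p.2) (a * b) := by
  have h1 : Summable fun n => ‖u n‖ := hu.summable.norm
  have h2 : Summable fun n => ‖v n‖ := hv.summable.norm
  have h3 : Summable fun p : ℕ × ℕ => u p.1 * v p.2 := summable_mul_of_summable_norm h1 h2
  exact hu.mul hv h3

lemma hasSum_two (x y : ℂ) (nx : ‖x‖ < 1) (ny : ‖y‖ < 1) :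
    HasSum (fun p : ℕ × ℕ =>
      (((p.1 : ℤ).sign + (p.2 : ℤ).sign : ℤ) : ℂ) * (x ^ p.1 * y ^ p.2))
      ((x + y) / ((1 - x) * (1 - y))) := by
  have sx := hasSum_sgn x nx
  have sy := hasSum_sgn y ny
  have gx := hasSum_geometric_of_norm_lt_one nx
  have gy := hasSum_geometric_of_norm_lt_one ny
  have p1 := hasSum_mul_aux _ _ _ _ sx gy
  have p2 := hasSum_mul_aux _ _ _ _ gx sy
  refine hasSum_congr (p1.add p2) (fun p => ?_) ?_
  · push_cast; ring
  · have : 1 - x ≠ 0 := by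
      intro h; rw [← sub_eq_zero.mp h] at nx; simp at nx
    have : 1 - y ≠ 0 := by
      intro h; rw [← sub_eq_zero.mp h] at ny; simp at ny
    field_simp

lemma summable_T (e : ℕ) (x y : ℂ) (nx : ‖x‖ < 1) (ny : ‖y‖ < 1) :
    Summable (fun v : ℕ+ × (ℕ × ℕ) => ((v.1 : ℕ) : ℂ) ^ e *
      ((((v.2.1 : ℤ).sign + (v.2.2 : ℤ).sign : ℤ) : ℂ) *
        ((x ^ (v.1 : ℕ)) ^ v.2.1 * (y ^ (v.1 : ℕ)) ^ v.2.2))) := by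
  set X := ‖x‖ with hX
  set Y := ‖y‖ with hY
  have X0 : 0 ≤ X := norm_nonneg _
  have Y0 : 0 ≤ Y := norm_nonneg _
  have hX1 : ∀ j : ℕ+, X ^ (j : ℕ) < 1 := fun j => pow_lt_one₀ X0 nx j.ne_zero
  have hY1 : ∀ j : ℕ+, Y ^ (j : ℕ) < 1 := fun j => pow_lt_one₀ Y0 ny j.ne_zero
  have hS : ∀ j : ℕ+, _ := fun j => (hasSum_two_real (X ^ (j : ℕ)) (Y ^ (j : ℕ)) (by positivity)
    (by positivity) (hX1 j) (hY1 j)).mul_left (((j : ℕ) : ℝ) ^ e)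
  refine Summable.of_norm_bounded (g := fun v : ℕ+ × (ℕ × ℕ) => ((v.1 : ℕ) : ℝ) ^ e *
      ((((v.2.1 : ℤ).sign + (v.2.2 : ℤ).sign : ℤ) : ℝ) *
        ((X ^ (v.1 : ℕ)) ^ v.2.1 * (Y ^ (v.1 : ℕ)) ^ v.2.2))) ?_ ?_
  · rw [summable_prod_of_nonneg]
    · refine ⟨fun j => (hS j).summable, ?_⟩
      simp only [fun j => (hS j).tsum_eq]
      have g : ∀ z : ℂ, ‖z‖ < 1 → Summable (fun j : ℕ+ => ((j : ℕ) : ℝ) ^ e * ‖z‖ ^ (j : ℕ)) := by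
        intro z hz
        have := summable_pow_mul_geometric_of_norm_lt_one e (r := ‖z‖) (by simpa using hz)
        exact this.comp_injective PNat.coe_injective
      have s := ((g x nx).add (g y ny)).mul_left (((1 - X) * (1 - Y))⁻¹)
      have X1 : 0 < 1 - X := by linarith
      have Y1 : 0 < 1 - Y := by linarith
      have hX2 : ∀ j : ℕ+, X ^ (j : ℕ) ≤ X := fun j => pow_le_of_le_one X0 nx.le j.ne_zero
      have hY2 : ∀ j : ℕ+, Y ^ (j : ℕ) ≤ Y := fun j => pow_le_of_le_one Y0 ny.le j.ne_zero
      refine Summable.of_nonneg_of_le (fun j => ?_) (fun j => ?_) s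
      · have := hX1 j
        have := hY1 j
        have a1 : 0 < 1 - X ^ (j : ℕ) := by linarith
        have a2 : 0 < 1 - Y ^ (j : ℕ) := by linarith
        positivity
      · have := hX2 j
        have := hY2 j
        rw [← mul_add, div_eq_inv_mul, ← hX, ← hY, mul_left_comm]
        have := hX1 j
        have a1 : 0 ≤ 1 - X ^ (j : ℕ) := by linarith
        gcongr
    · intro v
      have := sgn_nonneg v.2.1
      have := sgn_nonneg v.2.2
      simp only [Pi.zero_apply]
      push_cast
      positivity
  · intro v
    simp only [norm_mul, norm_pow, Complex.norm_natCast, ← hX, ← hY]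
    gcongr
    push_cast
    refine (norm_add_le _ _).trans ?_
    rw [norm_sgn, norm_sgn]

lemma inner_sum (m : ℕ) (hm : 1 ≤ m) (z : ℂ) (hz : 0 < z.im) :
    ∑' c : ℤ, 1 / (z + c) ^ (m + 1) = ((-2 * Real.pi * Complex.I) ^ (m + 1) / (Nat.factorial m : ℂ)) *
      ∑' j : ℕ+, ((j : ℕ) : ℂ) ^ m * (qexp z) ^ (j : ℕ) :=
  EisensteinSeries.qExpansion_identity_pnat hm ⟨z, hz⟩

lemma norm_qexp (z : ℂ) (hz : 0 < z.im) : ‖qexp z‖ < 1 :=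
  UpperHalfPlane.norm_exp_two_pi_I_lt_one ⟨z, hz⟩

lemma qexp_add (m n : ℕ) (τ σ : ℂ) : qexp (m * τ + n * σ) = qexp τ ^ m * qexp σ ^ n := by
  simp only [qexp, ← Complex.exp_nat_mul, ← Complex.exp_add]
  congr 1; ring

/-- Sum over `c`. -/
noncomputable def F (k : ℕ) (τ σ : ℂ) (p : ℤ × ℤ) : ℂ := ∑' c : ℤ, f k τ σ (p.1, p.2, c)

lemma F_neg (k : ℕ) (hk : Odd k) (τ σ : ℂ) (p : ℤ × ℤ) : F k τ σ (-p) = F k τ σ p := by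
  unfold F
  rw [← (Equiv.neg ℤ).tsum_eq]
  congr 1; ext c
  simp only [f, Equiv.neg_apply, Prod.fst_neg, Prod.snd_neg, Int.sign_neg]
  rw [show ((-p.1 : ℤ) : ℂ) * τ + ((-p.2 : ℤ) : ℂ) * σ + ((-c : ℤ) : ℂ) =
    -((p.1 : ℂ) * τ + (p.2 : ℂ) * σ + (c : ℂ)) by push_cast; ring, hk.neg_pow]
  push_cast
  rw [div_neg, ← neg_div, ← neg_div]
  ring_nf

lemma F_zero (k : ℕ) (τ σ : ℂ) (p : ℤ × ℤ) (h : p.1.sign + p.2.sign = 0) : F k τ σ p = 0 := by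
  unfold F
  simp [f, h]

lemma F_nat (e : ℕ) (he : 1 ≤ e) (τ σ : ℂ) (hτ : 0 < τ.im) (hσ : 0 < σ.im) (p : ℕ × ℕ) :
    2 * F (e + 1) τ σ ((p.1 : ℤ), (p.2 : ℤ)) =
      ((-2 * Real.pi * Complex.I) ^ (e + 1) / (Nat.factorial e : ℂ)) *
      ∑' j : ℕ+, ((j : ℕ) : ℂ) ^ e *
      ((((p.1 : ℤ).sign + (p.2 : ℤ).sign : ℤ) : ℂ) *
        ((qexp τ ^ (j : ℕ)) ^ p.1 * (qexp σ ^ (j : ℕ)) ^ p.2)) := by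
  by_cases h : (p.1 : ℤ).sign + (p.2 : ℤ).sign = 0
  · rw [F_zero _ _ _ _ h, h]; simp
  have h1 := (sign_aux _ _ h).2
  have hz : 0 < ((p.1 : ℂ) * τ + p.2 * σ).im := by
    simp
    rcases p with ⟨_ | m, _ | n⟩
    · simp at h1
    · simp; positivity
    · simp; positivity
    · push_cast; positivity
  have := inner_sum e he _ hz
  rw [qexp_add] at this
  have e1 : F (e + 1) τ σ ((p.1 : ℤ), (p.2 : ℤ)) =
      ((((p.1 : ℤ).sign + (p.2 : ℤ).sign : ℤ) : ℂ) / 2) *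
        ∑' c : ℤ, 1 / (((p.1 : ℂ) * τ + p.2 * σ) + c) ^ (e + 1) := by
    rw [← tsum_mul_left]
    unfold F f
    congr 1; ext c
    simp only [Int.cast_natCast]
    rw [mul_one_div]
  rw [e1, this]
  have e2 : ∀ j : ℕ+, ((j : ℕ) : ℂ) ^ e *
      ((((p.1 : ℤ).sign + (p.2 : ℤ).sign : ℤ) : ℂ) *
        ((qexp τ ^ (j : ℕ)) ^ p.1 * (qexp σ ^ (j : ℕ)) ^ p.2)) =
      (((p.1 : ℤ).sign + (p.2 : ℤ).sign : ℤ) : ℂ) * (((j : ℕ) : ℂ) ^ e *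
        (qexp τ ^ p.1 * qexp σ ^ p.2) ^ (j : ℕ)) := by
    intro j
    rw [mul_pow, ← pow_mul, ← pow_mul, ← pow_mul, ← pow_mul, mul_comm (j : ℕ) p.1,
      mul_comm (j : ℕ) p.2]
    ring
  simp only [e2]
  rw [tsum_mul_left]
  ring

lemma tsum_F (k : ℕ) (hk : Odd k) (τ σ : ℂ) (hF : Summable (F k τ σ)) :
    ∑' p, F k τ σ p = ∑' p : ℕ × ℕ, 2 * F k τ σ ((p.1 : ℤ), (p.2 : ℤ)) := by
  classical
  set s : Set (ℤ × ℤ) := {p | 0 ≤ p.1 ∧ 0 ≤ p.2} with hs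
  set G : ℤ × ℤ → ℂ := s.indicator (F k τ σ) with hG
  have sG : Summable G := hF.indicator s
  have e1 : ∀ p, F k τ σ p = G p + G (-p) := by
    intro p
    by_cases h : p.1.sign + p.2.sign = 0
    · have h0 : F k τ σ p = 0 := F_zero _ _ _ _ h
      have h0' : F k τ σ (-p) = 0 := by rw [F_neg k hk, h0]
      simp [hG, Set.indicator_apply, h0, h0']
    · obtain ⟨h1, h2⟩ := sign_aux _ _ h
      simp only [hG, Set.indicator_apply, F_neg k hk, hs, Set.mem_ofPred_eq, Prod.fst_neg,
        Prod.snd_neg]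
      rcases h1 with h1 | h1
      · rw [if_pos h1, if_neg (by grind), add_zero]
      · rw [if_neg (by grind), if_pos (by grind), zero_add]
  have sG' : Summable (fun p => G (-p)) := (Equiv.neg (ℤ × ℤ)).summable_iff.mpr sG
  have e2 : ∑' p, G (-p) = ∑' p, G p := (Equiv.neg (ℤ × ℤ)).tsum_eq G
  have inj : Function.Injective (fun p : ℕ × ℕ => ((p.1 : ℤ), (p.2 : ℤ))) := by
    rintro ⟨a, b⟩ ⟨c, d⟩ h
    simpa using h
  have e3 : ∑' p : ℕ × ℕ, G ((p.1 : ℤ), (p.2 : ℤ)) = ∑' p, G p := by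
    refine inj.tsum_eq (f := G) ?_
    intro p hp
    have : p ∈ s := by
      by_contra h
      exact hp (Set.indicator_of_notMem h _)
    exact ⟨(p.1.toNat, p.2.toNat), by
      ext
      · simpa using this.1
      · simpa using this.2⟩
  calc ∑' p, F k τ σ p = ∑' p, (G p + G (-p)) := tsum_congr e1
    _ = 2 * ∑' p, G p := by rw [sG.tsum_add sG', e2, two_mul]
    _ = _ := by
      rw [← e3, ← tsum_mul_left]
      refine tsum_congr fun p => ?_
      rw [hG, Set.indicator_of_mem]
      simp [hs]

lemma main (e : ℕ) (he : 4 ≤ e) (hodd : Odd (e + 1)) (τ σ : ℂ) (hτ : 0 < τ.im) (hσ : 0 < σ.im) :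
    ∑' v, f (e + 1) τ σ v = ellipticZeta (e + 1) τ σ := by
  have sf : Summable (f (e + 1) τ σ) := (summable_f (e + 1) (by omega) τ σ hτ hσ).of_norm
  have sf' : Summable (fun v : (ℤ × ℤ) × ℤ => f (e + 1) τ σ (v.1.1, v.1.2, v.2)) :=
    (Equiv.prodAssoc ℤ ℤ ℤ).summable_iff.mpr sf
  have e0 : ∑' v, f (e + 1) τ σ v = ∑' p, F (e + 1) τ σ p := by
    rw [← (Equiv.prodAssoc ℤ ℤ ℤ).tsum_eq]
    exact sf'.tsum_prod
  have sF : Summable (F (e + 1) τ σ) := sf'.prod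
  rw [e0, tsum_F _ hodd _ _ sF]
  simp only [fun p => F_nat e (by omega) τ σ hτ hσ p]
  rw [tsum_mul_left]
  have nx := norm_qexp τ hτ
  have ny := norm_qexp σ hσ
  have sT := summable_T e _ _ nx ny
  have hc := Summable.tsum_comm (f := fun (j : ℕ+) (p : ℕ × ℕ) => ((j : ℕ) : ℂ) ^ e *
      ((((p.1 : ℤ).sign + (p.2 : ℤ).sign : ℤ) : ℂ) *
        ((qexp τ ^ (j : ℕ)) ^ p.1 * (qexp σ ^ (j : ℕ)) ^ p.2))) sT
  rw [hc]
  unfold ellipticZeta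
  rw [show (-2 * (Real.pi : ℂ) * Complex.I) = -(2 * (Real.pi : ℂ) * Complex.I) by ring,
    hodd.neg_pow, neg_div, hodd.neg_one_pow]
  simp only [Nat.add_sub_cancel]
  congr 1
  refine tsum_congr fun j => ?_
  have n1 : ‖qexp τ ^ (j : ℕ)‖ < 1 := by
    rw [norm_pow]; exact pow_lt_one₀ (norm_nonneg _) nx j.ne_zero
  have n2 : ‖qexp σ ^ (j : ℕ)‖ < 1 := by
    rw [norm_pow]; exact pow_lt_one₀ (norm_nonneg _) ny j.ne_zero
  rw [tsum_mul_left, (hasSum_two _ _ n1 n2).tsum_eq, mul_div_assoc]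
  congr 2
  ring

end EZL

/-- Zagier's lattice-sum representation: for odd `k ≥ 5`,
`Z_k(τ,σ) = ∑'_{(a,b,c)≠0} ε(a,b)/(aτ+bσ+c)^k` with `ε(a,b) = (sign a + sign b)/2`,
the sum converging absolutely. -/
theorem ellipticZeta_eq_lattice_sum
    (k : ℕ) (hk : 5 ≤ k) (hodd : Odd k) (τ σ : ℂ) (hτ : τ ∈ UHP) (hσ : σ ∈ UHP) :
    Summable (fun v : {v : ℤ × ℤ × ℤ // v ≠ 0} =>
      ‖(((v.1.1.sign + v.1.2.1.sign : ℤ) : ℂ) / 2) /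
        ((v.1.1 : ℂ) * τ + (v.1.2.1 : ℂ) * σ + (v.1.2.2 : ℂ)) ^ k‖) ∧
    ∑' v : {v : ℤ × ℤ × ℤ // v ≠ 0},
        (((v.1.1.sign + v.1.2.1.sign : ℤ) : ℂ) / 2) /
          ((v.1.1 : ℂ) * τ + (v.1.2.1 : ℂ) * σ + (v.1.2.2 : ℂ)) ^ k =
      ellipticZeta k τ σ := by
  refine ⟨(EZL.summable_f k hk τ σ hτ hσ).subtype _, ?_⟩
  have h0 : Function.support (EZL.f k τ σ) ⊆ {v : ℤ × ℤ × ℤ | v ≠ 0} := by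
    intro v hv h
    subst h
    exact hv (by simp [EZL.f])
  refine (tsum_subtype_eq_of_support_subset h0).trans ?_
  obtain ⟨e, rfl⟩ : ∃ e, k = e + 1 := ⟨k - 1, by omega⟩
  exact EZL.main e (by omega) hodd τ σ hτ hσ
end
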